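/- arXiv:1311.5626 — 2 statements merged into one kernel-verified Lean document; each statement's English description precedes it below -/
import Mathlib

section
/- Let d≥1 and n≥3. The Yokonuma–Temperley–Lieb algebra YTL_{d,n}(u) is a finite-dimensional ℂ(u)-vector space of dimension dim_{ℂ(u)} YTL_{d,n}(u) = (d(nd−n+d+1)/2)·C_n − d(d−1), where C_n = binom(2n,n)/(n+1) is the n-th Catalan number. -/
noncomputable section

/-- The field `K = ℂ(u)` of rational functions over `ℂ`. -/
abbrev K : Type := RatFunc ℂ

/-- The indeterminate `u ∈ ℂ(u)`. -/
def uu : K := RatFunc.X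

/-- The free `K`-algebra on generators `g_i` (`i : ℕ`, left summand) and `t_j`
(`j : ℕ`, right summand); the generators with invalid indices are killed by the relations. -/
abbrev FA : Type := FreeAlgebra K (ℕ ⊕ ℕ)

/-- The free generator `g_i`. -/
def Gf (i : ℕ) : FA := FreeAlgebra.ι K (Sum.inl i)

/-- The free generator `t_j`. -/
def Tf (j : ℕ) : FA := FreeAlgebra.ι K (Sum.inr j)

/-- The element `e_i = (1/d) ∑_{s=0}^{d-1} t_i^s t_{i+1}^{d-s}`. -/
def ef (d i : ℕ) : FA :=
  ((d : K)⁻¹) • ∑ s ∈ Finset.range d, Tf i ^ s * Tf (i + 1) ^ (d - s)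

/-- The transposition `s_i = (i, i+1)` applied to `j`. -/
def swapIdx (i j : ℕ) : ℕ := if j = i then i + 1 else if j = i + 1 then i else j

/-- The defining relations of the Yokonuma–Hecke algebra `Y_{d,n}(u)`, together with junk
relations killing the generators with out-of-range indices (so that the quotient is presented
exactly by `g_1, …, g_{n-1}, t_1, …, t_n`). -/
inductive YRel (d n : ℕ) : FA → FA → Prop
  | commute (i j : ℕ) (hi : 1 ≤ i) (hin : i + 1 ≤ n) (hj : 1 ≤ j) (hjn : j + 1 ≤ n)
      (hfar : i + 1 < j ∨ j + 1 < i) :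
      YRel d n (Gf i * Gf j) (Gf j * Gf i)
  | braid (i : ℕ) (hi : 1 ≤ i) (hin : i + 2 ≤ n) :
      YRel d n (Gf i * Gf (i + 1) * Gf i) (Gf (i + 1) * Gf i * Gf (i + 1))
  | tcomm (i j : ℕ) (hi : 1 ≤ i) (hin : i ≤ n) (hj : 1 ≤ j) (hjn : j ≤ n) :
      YRel d n (Tf i * Tf j) (Tf j * Tf i)
  | tg (i j : ℕ) (hi : 1 ≤ i) (hin : i + 1 ≤ n) (hj : 1 ≤ j) (hjn : j ≤ n) :
      YRel d n (Tf j * Gf i) (Gf i * Tf (swapIdx i j))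
  | torder (j : ℕ) (hj : 1 ≤ j) (hjn : j ≤ n) :
      YRel d n (Tf j ^ d) 1
  | quad (i : ℕ) (hi : 1 ≤ i) (hin : i + 1 ≤ n) :
      YRel d n (Gf i ^ 2) (1 + (uu - 1) • ef d i + (uu - 1) • (ef d i * Gf i))
  | gjunk (i : ℕ) (h : i = 0 ∨ n ≤ i) : YRel d n (Gf i) 0
  | tjunk (j : ℕ) (h : j = 0 ∨ n < j) : YRel d n (Tf j) 0

/-- The Yokonuma–Hecke algebra `Y_{d,n}(u)`. -/
abbrev YH (d n : ℕ) : Type := RingQuot (YRel d n)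

/-- The generator `g_i` of `Y_{d,n}(u)`. -/
def yg (d n : ℕ) (i : ℕ) : YH d n := RingQuot.mkAlgHom K (YRel d n) (Gf i)

/-- The generator `t_j` of `Y_{d,n}(u)`. -/
def yt (d n : ℕ) (j : ℕ) : YH d n := RingQuot.mkAlgHom K (YRel d n) (Tf j)

/-- The idempotent `e_i ∈ Y_{d,n}(u)`. -/
def ye (d n : ℕ) (i : ℕ) : YH d n := RingQuot.mkAlgHom K (YRel d n) (ef d i)

end

/-- The defining relations of the Yokonuma–Temperley–Lieb algebra `YTL_{d,n}(u)`: the relations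
of `Y_{d,n}(u)` together with
`g_i g_{i+1} g_i + g_i g_{i+1} + g_{i+1} g_i + g_i + g_{i+1} + 1 = 0` for `1 ≤ i ≤ n-2`. -/
inductive YTLRel (d n : ℕ) : FA → FA → Prop
  | base {a b : FA} : YRel d n a b → YTLRel d n a b
  | tl (i : ℕ) (hi : 1 ≤ i) (hin : i + 2 ≤ n) :
      YTLRel d n
        (Gf i * Gf (i + 1) * Gf i + Gf i * Gf (i + 1) + Gf (i + 1) * Gf i +
          Gf i + Gf (i + 1) + 1) 0

/-- The Yokonuma–Temperley–Lieb algebra `YTL_{d,n}(u)`, the quotient of `Y_{d,n}(u)` by the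
two-sided ideal generated by the elements
`g_i g_{i+1} g_i + g_i g_{i+1} + g_{i+1} g_i + g_i + g_{i+1} + 1`, `1 ≤ i ≤ n-2`. -/
abbrev YTL (d n : ℕ) : Type := RingQuot (YTLRel d n)

/-- The image of the generator `g_i` in `YTL_{d,n}(u)`. -/
noncomputable def zg (d n : ℕ) (i : ℕ) : YTL d n :=
  RingQuot.mkAlgHom K (YTLRel d n) (Gf i)

/-- The image of the generator `t_j` in `YTL_{d,n}(u)`. -/
noncomputable def zt (d n : ℕ) (j : ℕ) : YTL d n :=
  RingQuot.mkAlgHom K (YTLRel d n) (Tf j)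

set_option linter.unusedSectionVars false

namespace TemperleyLieb

open Finset

/-- Products of consecutive generators `V k * V (k + 1) * ⋯ * V (m - 1)`. -/
def block {A : Type*} [Monoid A] (V : ℕ → A) (k m : ℕ) : A :=
  ((List.range' k (m - k)).map V).prod

/-- Jones normal words in the letters `1, …, m`: concatenations of increasing blocks
`[k₁, …, i₁] ++ [k₂, …, i₂] ++ ⋯` with `k₁ > k₂ > ⋯` and `i₁ > i₂ > ⋯`.
The second index is `k₁`, and is `0` for the empty word. -/
def normalWords : ℕ → ℕ → Finset (List ℕ)
  | 0, j => if j = 0 then {[]} else ∅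
  | m + 1, j => normalWords m j ∪
      if 1 ≤ j ∧ j ≤ m + 1 then
        ((range j).biUnion (normalWords m)).image (fun w => List.range' j (m + 2 - j) ++ w)
      else ∅

/-- The relations of the Temperley–Lieb algebra on generators `V 1, …, V (n - 1)`, with loop
parameter `u + 1` and `V i * V (i ± 1) * V i = u • V i`. -/
structure Relations {F A : Type*} [Field F] [Ring A] [Algebra F A] (n : ℕ) (u : F)
    (V : ℕ → A) : Prop where
  sq : ∀ i, 1 ≤ i → i < n → V i * V i = (u + 1) • V i
  up : ∀ i, 1 ≤ i → i + 1 < n → V i * V (i + 1) * V i = u • V i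
  down : ∀ i, 1 ≤ i → i + 1 < n → V (i + 1) * V i * V (i + 1) = u • V (i + 1)
  comm : ∀ i j, 1 ≤ i → i + 1 < j → j < n → V i * V j = V j * V i

section Block

variable {A : Type*} [Monoid A] (V : ℕ → A)

lemma block_of_le {k m : ℕ} (h : m ≤ k) : block V k m = 1 := by
  simp [block, Nat.sub_eq_zero_of_le h]

lemma block_cons {k m : ℕ} (h : k < m) : block V k m = V k * block V (k + 1) m := by
  obtain ⟨c, rfl⟩ := Nat.exists_eq_add_of_lt h
  simp [block, show k + c + 1 - k = c + 1 by omega, show k + c + 1 - (k + 1) = c by omega,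
    List.range'_succ]

lemma block_append {k j m : ℕ} (h₁ : k ≤ j) (h₂ : j ≤ m) :
    block V k m = block V k j * block V j m := by
  obtain ⟨a, rfl⟩ := Nat.exists_eq_add_of_le h₁
  obtain ⟨b, rfl⟩ := Nat.exists_eq_add_of_le h₂
  rw [block, block, block, ← List.prod_append, ← List.map_append]
  simp [show k + a + b - k = a + b by omega]

lemma commute_block {x : A} {k m : ℕ} (h : ∀ l, k ≤ l → l < m → Commute x (V l)) :
    Commute x (block V k m) := by
  apply Commute.list_prod_right
  intro y hy
  obtain ⟨l, hl, rfl⟩ := List.mem_map.1 hy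
  rw [List.mem_range'_1] at hl
  exact h l hl.1 (by omega)

end Block

section Span

variable {F A : Type*} [Field F] [Ring A] [Algebra F A] {n : ℕ} {u : F} {V : ℕ → A}

lemma Relations.commute (h : Relations n u V) {i j : ℕ} (hi : 1 ≤ i) (hj : 1 ≤ j) (hin : i < n)
    (hjn : j < n) (hij : i + 1 < j ∨ j + 1 < i) : Commute (V i) (V j) := by
  rcases hij with hij | hij
  · exact h.comm i j hi hij hjn
  · exact (h.comm j i hj hij hin).symm

lemma Relations.mul_block (h : Relations n u V) {j k m : ℕ} (hk : 1 ≤ k) (hkj : k < j)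
    (hjm : j < m) (hm : m ≤ n) :
    V j * block V k m = u • (block V j m * block V k (j - 1)) := by
  obtain ⟨i, rfl⟩ : ∃ i, j = i + 1 := ⟨j - 1, by omega⟩
  have h₁ : Commute (V (i + 1)) (block V k i) := commute_block V fun l _ _ =>
    h.commute (by omega) (by omega) (by omega) (by omega) (by omega)
  have h₂ : Commute (block V (i + 1) m) (block V k i) := commute_block V fun l _ _ =>
    (commute_block V fun l' _ _ =>
      h.commute (by omega) (by omega) (by omega) (by omega) (by omega)).symm
  have h₃ := h.down i (by omega) (by omega)
  have h₄ := block_cons V hjm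
  rw [Nat.add_sub_cancel, h₂.eq, block_append V (show k ≤ i by omega) (show i ≤ m by omega),
    block_cons V (show i < m by omega), h₄, ← mul_assoc, h₁.eq, mul_assoc, ← mul_assoc (V i),
    ← mul_assoc (V (i + 1)), ← mul_assoc (V (i + 1)), h₃, smul_mul_assoc, mul_smul_comm]

lemma Relations.block_mul_block (h : Relations n u V) {k j i m : ℕ} (hk : 1 ≤ k) (hkj : k ≤ j)
    (hji : j < i) (him : i < m) (hm : m ≤ n) :
    block V k m * block V j i = u • (block V (j + 2) m * block V k i) := by
  have h₁ : Commute (V j) (block V (j + 2) m) := commute_block V fun l _ _ =>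
    h.commute (by omega) (by omega) (by omega) (by omega) (by omega)
  have h₂ : Commute (block V (j + 2) m) (block V k (j + 1)) := commute_block V fun l _ _ =>
    (commute_block V fun l' _ _ =>
      h.commute (by omega) (by omega) (by omega) (by omega) (by omega)).symm
  have h₃ := h.up j (by omega) (by omega)
  have e₁ : block V k m = block V k j * (V j * (V (j + 1) * block V (j + 2) m)) := by
    rw [block_append V hkj (show j ≤ m by omega), block_cons V (show j < m by omega),
      block_cons V (show j + 1 < m by omega)]
  have e₂ : block V j i = V j * block V (j + 1) i := block_cons V hji
  have e₃ : block V k i = block V k (j + 1) * block V (j + 1) i :=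
    block_append V (by omega) hji
  have e₄ : block V k (j + 1) = block V k j * V j := by
    rw [block_append V hkj (Nat.le_succ j), block_cons V (Nat.lt_succ_self j),
      block_of_le V le_rfl, mul_one]
  calc block V k m * block V j i
      = block V k j * (V j * V (j + 1) * (block V (j + 2) m * V j)) * block V (j + 1) i := by
        rw [e₁, e₂]; simp only [mul_assoc]
    _ = block V k j * (V j * V (j + 1) * V j) * block V (j + 2) m * block V (j + 1) i := by
        rw [← h₁.eq]; simp only [mul_assoc]
    _ = u • (block V (j + 2) m * block V k i) := by
        rw [h₃, e₃, ← mul_assoc, h₂.eq, e₄]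
        simp only [mul_assoc, smul_mul_assoc, mul_smul_comm]

variable (F V) in
/-- The span of the normal words in the letters `1, …, m`. -/
def wordSpan (m : ℕ) : Submodule F A :=
  Submodule.span F {x | ∃ j, ∃ w ∈ normalWords m j, (w.map V).prod = x}

lemma normalWords_subset_succ (m j : ℕ) : normalWords m j ⊆ normalWords (m + 1) j := by
  rw [normalWords]; exact subset_union_left

lemma normalWords_mono {m m' : ℕ} (h : m ≤ m') (j : ℕ) : normalWords m j ⊆ normalWords m' j := by
  induction m', h using Nat.le_induction with
  | base => exact Subset.refl _
  | succ m' _ ih => exact ih.trans (normalWords_subset_succ m' j)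

lemma wordSpan_mono {m m' : ℕ} (h : m ≤ m') : wordSpan F V m ≤ wordSpan F V m' :=
  Submodule.span_mono fun _ ⟨j, w, hw, e⟩ => ⟨j, w, normalWords_mono h j hw, e⟩

/-- Decomposition of a nonempty normal word into its first block and the remaining word. -/
lemma exists_block_of_mem_normalWords {m j : ℕ} {w : List ℕ} (hj : 1 ≤ j)
    (hw : w ∈ normalWords m j) :
    ∃ i w', j ≤ i ∧ i < m + 1 ∧ 1 ≤ i ∧ (∃ j' < j, w' ∈ normalWords (i - 1) j') ∧
      w = List.range' j (i + 1 - j) ++ w' := by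
  induction m with
  | zero => simp [normalWords, show j ≠ 0 by omega] at hw
  | succ m ih =>
    rw [normalWords, mem_union] at hw
    rcases hw with hw | hw
    · obtain ⟨i, w', h₁, h₂, h⟩ := ih hw
      exact ⟨i, w', h₁, by omega, h⟩
    · split_ifs at hw with hjm
      · simp only [mem_image, mem_biUnion, mem_range] at hw
        obtain ⟨w', ⟨j', hj', hw'⟩, rfl⟩ := hw
        exact ⟨m + 1, w', hjm.2, by omega, by omega, ⟨j', hj', hw'⟩, rfl⟩
      · simp at hw

lemma prod_map_block_append (j i : ℕ) (w : List ℕ) :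
    ((List.range' j (i - j) ++ w).map V).prod = block V j i * (w.map V).prod := by
  simp [block]

lemma mem_normalWords_zero (m : ℕ) : [] ∈ normalWords m 0 :=
  normalWords_mono (Nat.zero_le m) 0 (by simp [normalWords])

lemma eq_nil_of_mem_normalWords_zero {m : ℕ} {w : List ℕ} (hw : w ∈ normalWords m 0) : w = [] := by
  induction m with
  | zero => simpa [normalWords] using hw
  | succ m ih => exact ih (by simpa [normalWords] using hw)

lemma block_mul_mem_of_closed (h : Relations n u V) {m : ℕ} (hm : m + 1 < n)
    (closed : ∀ i, 1 ≤ i → i ≤ m → ∀ x ∈ wordSpan F V m, V i * x ∈ wordSpan F V m) :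
    ∀ c k, 1 ≤ k → k + c = m + 2 → ∀ x ∈ wordSpan F V m,
      block V k (m + 2) * x ∈ wordSpan F V (m + 1) := by
  have closed_block : ∀ c k i, 1 ≤ k → i ≤ k + c → i ≤ m + 1 → ∀ x ∈ wordSpan F V m,
      block V k i * x ∈ wordSpan F V m := by
    intro c
    induction c with
    | zero =>
      intro k i _ hi _ x hx
      rwa [block_of_le V (by omega), one_mul]
    | succ c ih =>
      intro k i hk hi him x hx
      rcases Nat.lt_or_ge k i with hki | hki
      · rw [block_cons V hki, mul_assoc]
        exact closed k hk (by omega) _ (ih (k + 1) i (by omega) (by omega) him x hx)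
      · rwa [block_of_le V hki, one_mul]
  intro c
  induction c using Nat.strong_induction_on with
  | _ c ih =>
    intro k hk hkc x hx
    rcases Nat.eq_zero_or_pos c with rfl | hc
    · rw [block_of_le V (by omega), one_mul]
      exact wordSpan_mono (Nat.le_succ m) hx
    · induction hx using Submodule.span_induction with
      | zero => simp
      | add x y _ _ hx hy => rw [mul_add]; exact add_mem hx hy
      | smul a x _ hx => rw [mul_smul_comm]; exact Submodule.smul_mem _ _ hx
      | mem x hx =>
        obtain ⟨j, w, hw, rfl⟩ := hx
        rcases Nat.lt_or_ge j k with hjk | hjk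
        · refine Submodule.subset_span ⟨k, List.range' k (m + 2 - k) ++ w, ?_,
            prod_map_block_append _ _ _⟩
          rw [normalWords, if_pos ⟨hk, by omega⟩]
          exact mem_union_right _ (mem_image_of_mem _ (mem_biUnion.2 ⟨j, mem_range.2 hjk, hw⟩))
        · obtain ⟨i, w', hji, him, hi, ⟨j', hj', hw'⟩, rfl⟩ :=
            exists_block_of_mem_normalWords (hk.trans hjk) hw
          rw [prod_map_block_append, ← mul_assoc,
            h.block_mul_block hk hjk (by omega) (by omega) (by omega), smul_mul_assoc, mul_assoc]
          refine Submodule.smul_mem _ _ (ih (m - j) (by omega) (j + 2) (by omega) (by omega) _ ?_)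
          refine closed_block (i + 1) k (i + 1) hk (by omega) (by omega) _ ?_
          exact wordSpan_mono (show i - 1 ≤ m by omega) (Submodule.subset_span ⟨j', w', hw', rfl⟩)

/-- The span of the normal words is stable under left multiplication by the generators. -/
lemma mul_mem_wordSpan (h : Relations n u V) : ∀ m, m < n → ∀ i, 1 ≤ i → i ≤ m →
    ∀ x ∈ wordSpan F V m, V i * x ∈ wordSpan F V m := by
  intro m
  induction m with
  | zero => intro _ i hi him; omega
  | succ m ih =>
    intro hm i hi him x hx
    have closed := ih (by omega)
    have hblock : ∀ k, 1 ≤ k → k ≤ m + 2 → ∀ x ∈ wordSpan F V m,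
        block V k (m + 2) * x ∈ wordSpan F V (m + 1) := fun k hk hkm =>
      block_mul_mem_of_closed h hm closed (m + 2 - k) k hk (by omega)
    have hsmall : ∀ x ∈ wordSpan F V m, V i * x ∈ wordSpan F V (m + 1) := by
      intro x hx
      rcases Nat.lt_or_ge m i with hmi | hmi
      · have := hblock (m + 1) (by omega) (by omega) x hx
        rw [block_cons V (by omega), block_of_le V (by omega), mul_one] at this
        rwa [show i = m + 1 by omega]
      · exact wordSpan_mono (Nat.le_succ m) (closed i hi hmi x hx)
    induction hx using Submodule.span_induction with
    | zero => simp
    | add x y _ _ hx hy => rw [mul_add]; exact add_mem hx hy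
    | smul a x _ hx => rw [mul_smul_comm]; exact Submodule.smul_mem _ _ hx
    | mem x hx =>
      obtain ⟨k, w, hw, rfl⟩ := hx
      rw [normalWords, mem_union] at hw
      rcases hw with hw | hw
      · exact hsmall _ (Submodule.subset_span ⟨k, w, hw, rfl⟩)
      · split_ifs at hw with hk
        swap
        · simp at hw
        simp only [mem_image, mem_biUnion, mem_range] at hw
        obtain ⟨w, ⟨j, _, hw⟩, rfl⟩ := hw
        have hwm : (w.map V).prod ∈ wordSpan F V m := Submodule.subset_span ⟨j, w, hw, rfl⟩
        rw [prod_map_block_append, ← mul_assoc]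
        rcases lt_trichotomy k i with hki | rfl | hki
        · rw [h.mul_block hk.1 hki (by omega) (by omega), smul_mul_assoc, mul_assoc]
          refine Submodule.smul_mem _ _ (hblock i hi (by omega) _ ?_)
          have aux : ∀ c l, 1 ≤ l → l + c ≤ m + 1 → block V l (l + c) * (w.map V).prod ∈
              wordSpan F V m := by
            intro c
            induction c with
            | zero => intro l _ _; rwa [block_of_le V (by omega), one_mul]
            | succ c ihc =>
              intro l hl hlc
              rw [block_cons V (by omega), mul_assoc, ← add_assoc, add_right_comm]
              exact closed l hl (by omega) _ (ihc (l + 1) (by omega) (by omega))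
          have := aux (i - 1 - k) k hk.1 (by omega)
          rwa [show k + (i - 1 - k) = i - 1 by omega] at this
        · rw [block_cons V (by omega), ← mul_assoc, h.sq k hi (by omega), smul_mul_assoc,
            ← block_cons V (by omega), smul_mul_assoc]
          exact Submodule.smul_mem _ _ (hblock k hi (by omega) _ hwm)
        · rcases Nat.lt_or_ge (i + 1) k with hik | hik
          · have hc : Commute (V i) (block V k (m + 2)) := commute_block V fun l _ _ =>
              h.commute hi (by omega) (by omega) (by omega) (by omega)
            rw [hc.eq, mul_assoc]
            exact hblock k hk.1 (by omega) _ (closed i hi (by omega) _ hwm)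
          · obtain rfl : k = i + 1 := by omega
            rw [← block_cons V (by omega)]
            exact hblock i hi (by omega) _ hwm

lemma one_mem_wordSpan (m : ℕ) : (1 : A) ∈ wordSpan F V m :=
  Submodule.subset_span ⟨0, [], mem_normalWords_zero m, by simp⟩

end Span

/-- Perfect matchings of the set `ℤ`, as fixed point free involutions. -/
def Matching : Type := {σ : ℤ → ℤ // (∀ x, σ (σ x) = x) ∧ ∀ x, σ x ≠ x}

namespace Matching

instance : CoeFun Matching fun _ => ℤ → ℤ := ⟨Subtype.val⟩

lemma apply_apply (σ : Matching) (x : ℤ) : σ (σ x) = x := σ.2.1 x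

lemma apply_ne (σ : Matching) (x : ℤ) : σ x ≠ x := σ.2.2 x

@[ext] lemma ext {σ τ : Matching} (h : ∀ x, σ x = τ x) : σ = τ := Subtype.ext (funext h)

/-- The function underlying `Matching.surgery`. -/
def surgeryFun (i : ℤ) (σ : ℤ → ℤ) (x : ℤ) : ℤ :=
  if x = i then i + 1 else if x = i + 1 then i
  else if x = σ i then σ (i + 1) else if x = σ (i + 1) then σ i else σ x

lemma surgeryFun_surgeryFun {σ : ℤ → ℤ} (h₁ : ∀ x, σ (σ x) = x) (h₂ : ∀ x, σ x ≠ x) (i x : ℤ) :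
    surgeryFun i σ (surgeryFun i σ x) = x := by
  have := h₁ i
  have := h₁ (i + 1)
  have := h₁ x
  have := h₂ x
  unfold surgeryFun
  split_ifs <;> grind

lemma surgeryFun_ne {σ : ℤ → ℤ} (h₁ : ∀ x, σ (σ x) = x) (h₂ : ∀ x, σ x ≠ x) (i x : ℤ) :
    surgeryFun i σ x ≠ x := by
  have := h₁ i
  have := h₁ (i + 1)
  have := h₁ x
  have := h₂ x
  unfold surgeryFun
  split_ifs <;> grind

/-- The effect of a Temperley–Lieb generator on a matching: `i` is matched with `i + 1`, and
their former partners are matched with each other. -/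
def surgery (i : ℤ) (σ : Matching) : Matching :=
  ⟨surgeryFun i σ, surgeryFun_surgeryFun σ.2.1 σ.2.2 i, surgeryFun_ne σ.2.1 σ.2.2 i⟩

lemma surgery_apply (i : ℤ) (σ : Matching) (x : ℤ) : surgery i σ x =
    if x = i then i + 1 else if x = i + 1 then i
    else if x = σ i then σ (i + 1) else if x = σ (i + 1) then σ i else σ x := rfl

lemma surgery_apply_self (i : ℤ) (σ : Matching) : surgery i σ i = i + 1 := by
  simp [surgery_apply]

lemma surgery_apply_add_one (i : ℤ) (σ : Matching) : surgery i σ (i + 1) = i := by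
  simp [surgery_apply]

lemma surgery_apply_of_ne {i x : ℤ} (σ : Matching) (h : x ≠ i) (h' : x ≠ i + 1) :
    surgery i σ x = if x = σ i then σ (i + 1) else if x = σ (i + 1) then σ i else σ x := by
  rw [surgery_apply, if_neg h, if_neg h']

lemma surgery_eq_self {i : ℤ} {σ : Matching} (h : σ i = i + 1) : surgery i σ = σ := by
  ext x
  have := σ.apply_apply i
  rw [surgery_apply]
  split_ifs <;> grind

lemma surgery_surgery_succ {i : ℤ} {σ : Matching} (h : σ i = i + 1) :
    surgery i (surgery (i + 1) σ) = σ := by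
  ext x
  have e := σ.apply_apply i
  have := σ.apply_apply (i + 1 + 1)
  have := σ.apply_apply x
  have := σ.apply_ne (i + 1 + 1)
  rw [h] at e
  have h₁ : surgery (i + 1) σ i = σ (i + 1 + 1) := by
    rw [surgery_apply_of_ne σ (by omega) (by omega), if_pos e.symm]
  rw [surgery_apply, h₁, surgery_apply_self, surgery_apply]
  split_ifs <;> grind

lemma surgery_succ_surgery {i : ℤ} {σ : Matching} (h : σ (i + 1) = i + 1 + 1) :
    surgery (i + 1) (surgery i σ) = σ := by
  ext x
  have e := σ.apply_apply (i + 1)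
  have := σ.apply_apply i
  have := σ.apply_apply x
  have := σ.apply_ne i
  rw [h] at e
  have h₁ : surgery i σ (i + 1 + 1) = σ i := by
    rw [surgery_apply_of_ne σ (by omega) (by omega)]
    grind
  rw [surgery_apply, h₁, surgery_apply_add_one, surgery_apply]
  split_ifs <;> grind

lemma surgery_comm {i j : ℤ} (hij : i + 1 < j) (σ : Matching) :
    surgery i (surgery j σ) = surgery j (surgery i σ) := by
  ext x
  have := σ.apply_apply i
  have := σ.apply_apply (i + 1)
  have := σ.apply_apply j
  have := σ.apply_apply (j + 1)
  have := σ.apply_apply x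
  have := σ.apply_ne i
  have := σ.apply_ne (i + 1)
  have := σ.apply_ne j
  have := σ.apply_ne (j + 1)
  rw [surgery_apply i, surgery_apply_of_ne σ (x := i) (by omega) (by omega),
    surgery_apply_of_ne σ (x := i + 1) (by omega) (by omega), surgery_apply j σ,
    surgery_apply j (surgery i σ), surgery_apply_of_ne σ (x := j) (by omega) (by omega),
    surgery_apply_of_ne σ (x := j + 1) (by omega) (by omega), surgery_apply i σ]
  generalize σ.1 x = y at *
  by_cases c₁ : i = σ j <;> by_cases c₂ : i = σ (j + 1) <;> by_cases c₃ : i + 1 = σ j <;>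
    by_cases c₄ : i + 1 = σ (j + 1) <;> simp only [c₁, c₂, c₃, c₄, if_true, if_false] <;>
    grind (splits := 20)

/-- The rainbow matching `x ↔ 1 - x`. -/
def rainbow : Matching := ⟨fun x => 1 - x, fun x => by ring, fun x => by grind⟩

lemma rainbow_apply (x : ℤ) : rainbow x = 1 - x := rfl

/-- The matching obtained from `τ` by a word of surgeries. -/
def act (w : List ℕ) (τ : Matching) : Matching := w.foldr (fun (i : ℕ) σ => surgery (i : ℤ) σ) τ

lemma act_nil (τ : Matching) : act [] τ = τ := rfl

lemma act_cons (i : ℕ) (w : List ℕ) (τ : Matching) : act (i :: w) τ = surgery i (act w τ) := rfl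

lemma act_append (w w' : List ℕ) (τ : Matching) : act (w ++ w') τ = act w (act w' τ) := by
  simp [act]

/-- The renaming of points effected by the surgeries at `k, k + 1, …, m` on a matching in which
`m + 1` and `-m` are matched. -/
def rename (k m x : ℤ) : ℤ :=
  if x = -m then k else if x = m then -m else if x = m + 1 then k + 1
  else if k ≤ x ∧ x < m then x + 2 else x

lemma rename_injective {k m : ℤ} (hk : 1 ≤ k) (hkm : k ≤ m) :
    Function.Injective (rename k m) := by
  intro x y h
  unfold rename at h
  grind

lemma act_block_rename {τ : Matching} (m : ℕ) (hτ : τ (m + 1) = -m) (c : ℕ) :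
    ∀ k : ℕ, 1 ≤ k → k + c = m → ∀ x,
      act (List.range' k (c + 1)) τ (rename k m x) = rename k m (τ x) := by
  have hτ' : τ (-m) = m + 1 := by rw [← hτ, τ.apply_apply]
  have h₁ := τ.apply_apply
  induction c with
  | zero =>
    intro k hk hkm x
    obtain rfl : k = m := by omega
    have := h₁ x
    have := h₁ k
    have e : ∀ y : ℤ, rename k k y = if y = -k then (k : ℤ) else if y = k then (-k : ℤ) else y := by
      intro y; unfold rename; grind
    rw [zero_add, List.range'_one, act_cons, act_nil, surgery_apply, hτ, e, e]
    by_cases hx : x = -k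
    · subst hx
      grind
    by_cases hx₂ : x = k
    · subst hx₂
      grind
    rw [if_neg hx, if_neg hx₂]
    grind
  | succ c ih =>
    intro k hk hkm x
    have ih := ih (k + 1) (by omega) (by omega)
    rw [List.range'_succ, act_cons]
    generalize act (List.range' (k + 1) (c + 1)) τ = σ at ih
    push_cast at ih
    have a₁ : rename (k + 1) m k = k := by unfold rename; grind
    have a₂ : rename (k + 1) m (-m) = k + 1 := by unfold rename; grind
    have a₃ : rename (k + 1) m (m + 1) = k + 1 + 1 := by unfold rename; grind
    have b₁ : σ k = rename (k + 1) m (τ k) := by rw [← ih, a₁]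
    have b₂ : σ (k + 1) = k + 1 + 1 := by rw [← a₂, ih, hτ', a₃, a₂]
    have e : ∀ y : ℤ, rename k m y = if y = k then (k + 2 : ℤ) else if y = -m then (k : ℤ)
        else if y = m + 1 then (k + 1 : ℤ) else rename (k + 1) m y := by
      intro y; unfold rename; grind
    have inj := rename_injective (k := k + 1) (m := m) (by omega) (by omega)
    have c₁ : ∀ y : ℤ, rename (k + 1) m y = k ↔ y = k := fun y =>
      ⟨fun h => inj (h.trans a₁.symm), fun h => h ▸ a₁⟩
    have c₂ : ∀ y : ℤ, rename (k + 1) m y = k + 1 ↔ y = -m := fun y =>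
      ⟨fun h => inj (h.trans a₂.symm), fun h => h ▸ a₂⟩
    have c₃ : ∀ y : ℤ, rename (k + 1) m y = k + 1 + 1 ↔ y = m + 1 := fun y =>
      ⟨fun h => inj (h.trans a₃.symm), fun h => h ▸ a₃⟩
    have c₄ : ∀ y : ℤ, rename (k + 1) m y = rename (k + 1) m (τ k) ↔ y = τ k := fun y =>
      inj.eq_iff
    have d₁ := ih x
    have := h₁ k
    have := h₁ x
    have := τ.apply_ne k
    rw [surgery_apply, b₁, b₂, e x, e (τ x)]
    have := c₁ x
    have := c₂ x
    have := c₃ x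
    have := c₄ x
    have := c₃ (τ k)
    clear e
    by_cases hx : x = k
    · subst hx
      grind
    by_cases hx₂ : x = -m
    · subst hx₂
      grind
    by_cases hx₃ : x = m + 1
    · subst hx₃
      grind
    simp only [hx, hx₂, hx₃, if_false]
    grind

end Matching

open Finset Matching

lemma mem_normalWords_succ {m j : ℕ} {w : List ℕ} (hw : w ∈ normalWords (m + 1) j) :
    w ∈ normalWords m j ∨ 1 ≤ j ∧ j ≤ m + 1 ∧ ∃ j' < j, ∃ w' ∈ normalWords m j',
      w = List.range' j (m + 1 - j + 1) ++ w' := by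
  rw [normalWords, mem_union] at hw
  refine hw.imp id fun hw => ?_
  split_ifs at hw with hj
  · simp only [mem_image, mem_biUnion, mem_range] at hw
    obtain ⟨w', ⟨j', hj', hw'⟩, rfl⟩ := hw
    exact ⟨hj.1, hj.2, j', hj', w', hw', by rw [show m + 2 - j = m + 1 - j + 1 by omega]⟩
  · simp at hw

/-- The matching of a normal word is trivial beyond its letters, and the first letter of the word
is the last position at which the matching has an arc `l ↔ l + 1`. -/
structure NormalMatching (m j : ℕ) (σ : Matching) : Prop where
  far : ∀ l : ℤ, m + 1 < l → σ l = 1 - l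
  first : 1 ≤ j → σ j = j + 1
  last : ∀ l : ℤ, 1 ≤ l → j < l → σ l ≠ l + 1

lemma NormalMatching.succ {m j : ℕ} {σ : Matching} (h : NormalMatching m j σ) :
    NormalMatching (m + 1) j σ :=
  ⟨fun l hl => h.far l (by push_cast at hl; omega), h.first, h.last⟩

lemma NormalMatching.act_rename {m j k : ℕ} {τ : Matching} (h : NormalMatching m j τ)
    (hk : 1 ≤ k) (hkm : k ≤ m + 1) (x : ℤ) :
    act (List.range' k (m + 1 - k + 1)) τ (rename k (m + 1) x) = rename k (m + 1) (τ x) := by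
  have := act_block_rename (τ := τ) (m + 1)
    (by rw [h.far _ (by push_cast; omega)]; push_cast; ring) (m + 1 - k) k hk (by omega) x
  exact_mod_cast this

lemma NormalMatching.block {m j k : ℕ} {τ : Matching} (h : NormalMatching m j τ)
    (hjk : j < k) (hkm : k ≤ m + 1) :
    NormalMatching (m + 1) k (act (List.range' k (m + 1 - k + 1)) τ) := by
  have key := h.act_rename (by omega) hkm
  generalize act (List.range' k (m + 1 - k + 1)) τ = σ at key
  have h₁ := h.far (m + 2) (by omega)
  have h₂ := τ.apply_apply (m + 2)
  have far : ∀ l : ℤ, ((m + 1 : ℕ) : ℤ) + 1 < l → σ l = 1 - l := by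
    intro l hl
    push_cast at hl
    have e := key l
    rw [h.far l (by omega)] at e
    unfold rename at e
    grind
  have first : σ k = k + 1 := by
    have e := key (-(m + 1))
    rw [show -((m : ℤ) + 1) = τ (m + 2) by rw [h₁]; ring, h₂, h₁] at e
    unfold rename at e
    grind
  refine ⟨far, fun _ => first, ?_⟩
  intro l hl hkl hσ
  have e₁ := σ.apply_apply k
  have e₂ := σ.apply_apply l
  rcases eq_or_ne l (k + 1) with rfl | hne
  · grind
  rcases lt_trichotomy l (m + 2) with hlt | rfl | hlt
  · have e := key (l - 2)
    have hr₁ : rename k (m + 1) (l - 2) = l := by unfold rename; grind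
    have hr₂ : rename k (m + 1) (l - 1) = l + 1 := by unfold rename; grind
    rw [hr₁, hσ, ← hr₂] at e
    exact h.last (l - 2) (by omega) (by omega)
      ((rename_injective (by omega) (by omega) e).symm.trans (by ring))
  · have := far (m + 3) (by push_cast; omega)
    have := σ.apply_apply (m + 2)
    grind
  · have := far l (by push_cast; omega)
    omega

lemma NormalMatching.block_apply_ne {m j k : ℕ} {τ : Matching} (h : NormalMatching m j τ)
    (hjk : j < k) (hkm : k ≤ m + 1) :
    act (List.range' k (m + 1 - k + 1)) τ (m + 2) ≠ 1 - (m + 2) := by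
  have key := h.act_rename (by omega) hkm
  generalize act (List.range' k (m + 1 - k + 1)) τ = σ at key
  have inj := rename_injective (k := k) (m := m + 1) (by omega) (by omega)
  have h₁ := h.far (m + 2) (by omega)
  have h₂ := τ.apply_apply (m + 2)
  intro hσ
  have hr : rename k (m + 1) (m + 1) = 1 - (m + 2) := by unfold rename; grind
  rcases Nat.lt_or_ge m k with hmk | hmk
  · have e := key (m + 2)
    have hr' : rename k (m + 1) (m + 2) = m + 2 := by unfold rename; grind
    rw [hr', hσ, ← hr] at e
    have := inj e
    omega
  · have e := key m
    have hr' : rename k (m + 1) m = m + 2 := by unfold rename; grind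
    rw [hr', hσ, ← hr] at e
    exact h.last m (by omega) (by omega) (inj e).symm

lemma normalMatching_act {m j : ℕ} {w : List ℕ} (hw : w ∈ normalWords m j) :
    NormalMatching m j (act w rainbow) := by
  induction m generalizing j w with
  | zero =>
    by_cases hj : j = 0
    · obtain rfl : w = [] := by simpa [normalWords, hj] using hw
      exact ⟨fun l _ => rfl, fun h => by omega, fun l hl _ => by rw [act_nil, rainbow_apply]; omega⟩
    · simp [normalWords, hj] at hw
  | succ m ih =>
    rcases mem_normalWords_succ hw with hw | ⟨_, hj, j', hj', w', hw', rfl⟩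
    · exact (ih hw).succ
    · rw [act_append]
      exact (ih hw').block hj' hj

lemma NormalMatching.index_unique {m m' j j' : ℕ} {σ : Matching} (h : NormalMatching m j σ)
    (h' : NormalMatching m' j' σ) : j = j' := by
  rcases lt_trichotomy j j' with hj | hj | hj
  · exact absurd (h'.first (by omega)) (h.last j' (by omega) (by omega))
  · exact hj
  · exact absurd (h.first (by omega)) (h'.last j (by omega) (by omega))

lemma act_rainbow_injective {m j j' : ℕ} {w w' : List ℕ} (hw : w ∈ normalWords m j)
    (hw' : w' ∈ normalWords m j') (h : act w rainbow = act w' rainbow) : w = w' := by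
  induction m generalizing j j' w w' with
  | zero =>
    simp only [normalWords] at hw hw'
    split_ifs at hw hw' <;> simp_all
  | succ m ih =>
    obtain rfl : j = j' := (normalMatching_act hw).index_unique (h ▸ normalMatching_act hw')
    rcases mem_normalWords_succ hw with hv | ⟨h₁, h₂, k, hk, v, hv, rfl⟩ <;>
      rcases mem_normalWords_succ hw' with hv' | ⟨h₁, h₂, k', hk', v', hv', rfl⟩
    · exact ih hv hv' h
    · rw [act_append] at h
      exact absurd (h ▸ (normalMatching_act hv).far (m + 2) (by omega))
        ((normalMatching_act hv').block_apply_ne hk' h₂)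
    · rw [act_append] at h
      exact absurd (h ▸ (normalMatching_act hv').far (m + 2) (by omega))
        ((normalMatching_act hv).block_apply_ne hk h₂)
    · rw [act_append, act_append] at h
      rw [ih hv hv']
      ext x
      apply rename_injective (k := j) (m := m + 1) (by omega) (by omega)
      rw [← (normalMatching_act hv).act_rename h₁ h₂, h,
        (normalMatching_act hv').act_rename h₁ h₂]

lemma normalWords_disjoint {m j j' : ℕ} (h : j ≠ j') :
    Disjoint (normalWords m j) (normalWords m j') :=
  disjoint_left.2 fun _ hw hw' =>
    h ((normalMatching_act hw).index_unique (normalMatching_act hw'))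

lemma card_normalWords_zero (m : ℕ) : (normalWords m 0).card = 1 := by
  rw [card_eq_one]
  exact ⟨[], eq_singleton_iff_unique_mem.2
    ⟨mem_normalWords_zero m, fun _ => eq_nil_of_mem_normalWords_zero⟩⟩

lemma card_biUnion_normalWords (m j : ℕ) :
    ((range j).biUnion (normalWords m)).card = ∑ i ∈ range j, (normalWords m i).card :=
  card_biUnion fun _ _ _ _ h => normalWords_disjoint h

lemma card_normalWords_succ {m j : ℕ} (hj : 1 ≤ j) (hjm : j ≤ m + 1) :
    (normalWords (m + 1) j).card = ∑ i ∈ range (j + 1), (normalWords m i).card := by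
  rw [normalWords, if_pos ⟨hj, hjm⟩, card_union_of_disjoint, card_image_of_injective,
    card_biUnion_normalWords, sum_range_succ, add_comm]
  · exact fun _ _ h => List.append_cancel_left h
  · refine disjoint_left.2 fun w hw hw' => ?_
    simp only [mem_image, mem_biUnion, mem_range] at hw'
    obtain ⟨w', ⟨j', hj', hw'⟩, rfl⟩ := hw'
    rw [show m + 2 - j = m + 1 - j + 1 by omega] at hw
    have := (normalMatching_act hw).far (m + 2) (by omega)
    rw [act_append] at this
    exact (normalMatching_act hw').block_apply_ne hj' hjm this

lemma normalWords_eq_empty {m j : ℕ} (h : m < j) : normalWords m j = ∅ := by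
  induction m with
  | zero => rw [normalWords, if_neg (by omega)]
  | succ m ih => rw [normalWords, ih (by omega), if_neg (by omega), union_empty]

lemma sum_card_normalWords (m j : ℕ) (hj : j ≤ m) :
    ∑ i ∈ range (j + 2), (normalWords m i).card + (m + 2 + j).choose j =
      (m + 2 + j).choose (j + 1) := by
  induction m generalizing j with
  | zero =>
    obtain rfl : j = 0 := by omega
    simp [sum_range_succ, normalWords]
  | succ m ih =>
    induction j with
    | zero =>
      have := ih 0 (by omega)
      rw [sum_range_succ, card_normalWords_succ (by omega) (by omega)]
      simp [card_normalWords_zero] at this ⊢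
      omega
    | succ j ihj =>
      have ihj := ihj (by omega)
      rw [show j + 1 + 2 = j + 2 + 1 by ring, sum_range_succ]
      have p₁ := Nat.choose_succ_succ (m + 1 + 2 + j) j
      have p₂ := Nat.choose_succ_succ (m + 1 + 2 + j) (j + 1)
      rw [show m + 1 + 2 + (j + 1) = (m + 1 + 2 + j).succ by simp; ring, p₁, p₂]
      rcases Nat.lt_or_ge j m with hjm | hjm
      · have := ih (j + 1) hjm
        rw [card_normalWords_succ (by omega) (by omega)]
        rw [show m + 2 + (j + 1) = m + 1 + 2 + j by ring] at this
        simp only [Nat.succ_eq_add_one] at *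
        rw [show j + 1 + 2 = j + 2 + 1 by ring] at this
        omega
      · obtain rfl : j = m := by omega
        rw [normalWords_eq_empty (by omega)]
        have := Nat.choose_symm_of_eq_add (show j + 1 + 2 + j = (j + 1) + (j + 2) by ring)
        simp only [card_empty, Nat.succ_eq_add_one] at *
        rw [show j + 1 + 1 = j + 2 by ring]
        omega

/-- All normal words in the letters `1, …, m`. -/
def allWords (m : ℕ) : Finset (List ℕ) := (range (m + 2)).biUnion (normalWords m)

lemma card_allWords (m : ℕ) : (allWords m).card = catalan (m + 1) := by
  have h₁ := sum_card_normalWords m m le_rfl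
  have h₂ := Nat.choose_succ_right_eq (m + 2 + m) m
  have h₃ := succ_mul_catalan_eq_centralBinom (m + 1)
  rw [Nat.centralBinom, show 2 * (m + 1) = m + 2 + m by ring] at h₃
  rw [allWords, card_biUnion_normalWords]
  rw [show m + 2 + m - m = m + 2 by omega] at h₂
  refine Nat.eq_of_mul_eq_mul_left (show 0 < m + 1 + 1 by omega) ?_
  rw [h₃]
  zify at *
  linear_combination (m + 2 : ℤ) * h₁ + h₂

lemma mem_allWords {m : ℕ} {w : List ℕ} : w ∈ allWords m ↔ ∃ j, w ∈ normalWords m j := by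
  simp only [allWords, mem_biUnion, mem_range]
  refine ⟨fun ⟨j, _, h⟩ => ⟨j, h⟩, fun ⟨j, h⟩ => ⟨j, ?_, h⟩⟩
  by_contra hj
  rw [normalWords_eq_empty (by omega)] at h
  simp at h

lemma letters_of_mem_normalWords {m j : ℕ} {w : List ℕ} (hw : w ∈ normalWords m j) :
    ∀ i ∈ w, 1 ≤ i ∧ i ≤ m := by
  induction m generalizing j w with
  | zero =>
    simp only [normalWords] at hw
    split_ifs at hw <;> simp_all
  | succ m ih =>
    rcases mem_normalWords_succ hw with hw | ⟨h₁, h₂, j', hj', w', hw', rfl⟩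
    · exact fun i hi => ⟨(ih hw i hi).1, (ih hw i hi).2.trans (Nat.le_succ m)⟩
    · intro i hi
      rw [List.mem_append, List.mem_range'_1] at hi
      rcases hi with hi | hi
      · omega
      · exact ⟨(ih hw' i hi).1, (ih hw' i hi).2.trans (Nat.le_succ m)⟩

section Representation

variable {L : Type*} [Field L]

/-- The coefficient with which a Temperley–Lieb generator acts on a matching. -/
noncomputable def weight (u s : L) (i : ℤ) (σ : Matching) : L := if σ i = i + 1 then u + 1 else s

/-- The action of the Temperley–Lieb generators on the space spanned by matchings. -/
noncomputable def matchingRep (u s : L) (i : ℕ) : Module.End L (Matching →₀ L) :=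
  Finsupp.linearCombination L fun σ => Finsupp.single (surgery i σ) (weight u s i σ)

lemma matchingRep_single (u s : L) (i : ℕ) (σ : Matching) (a : L) :
    matchingRep u s i (Finsupp.single σ a) =
      Finsupp.single (surgery i σ) (weight u s i σ * a) := by
  simp [matchingRep, mul_comm]

lemma weight_of_eq {u s : L} {i : ℤ} {σ : Matching} (h : σ i = i + 1) :
    weight u s i σ = u + 1 := if_pos h

lemma weight_of_ne {u s : L} {i : ℤ} {σ : Matching} (h : σ i ≠ i + 1) :
    weight u s i σ = s := if_neg h

lemma weight_surgery_of_far {u s : L} {i j : ℤ} (hij : i + 1 < j ∨ j + 1 < i) (σ : Matching) :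
    weight u s i (surgery j σ) * weight u s j σ = weight u s j (surgery i σ) * weight u s i σ := by
  have := σ.apply_apply i
  have := σ.apply_apply j
  have := σ.apply_apply (i + 1)
  have := σ.apply_apply (j + 1)
  have h₁ := surgery_apply_of_ne σ (i := j) (x := i) (by omega) (by omega)
  have h₂ := surgery_apply_of_ne σ (i := i) (x := j) (by omega) (by omega)
  unfold weight
  rw [h₁, h₂]
  grind

lemma weight_ne_zero {u s : L} (hu : u + 1 ≠ 0) (hs : s ≠ 0) (i : ℤ) (σ : Matching) :
    weight u s i σ ≠ 0 := by
  unfold weight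
  split_ifs <;> assumption

lemma surgery_succ_apply_ne {i : ℤ} {σ : Matching} : surgery (i + 1) σ i ≠ i + 1 := by
  intro h
  have := (surgery (i + 1) σ).apply_apply i
  rw [h, surgery_apply_self] at this
  omega

lemma surgery_apply_succ_ne {i : ℤ} {σ : Matching} : surgery i σ (i + 1) ≠ i + 1 + 1 := by
  rw [surgery_apply_add_one]
  omega

lemma relations_matchingRep {F : Type*} [Field F] [Algebra F L] (n : ℕ) (u : F) {s : L}
    (hs : s * s = algebraMap F L u) :
    Relations n u (matchingRep (algebraMap F L u) s) := by
  have hu : ∀ (a : F) (x : Module.End L (Matching →₀ L)), a • x = algebraMap F L a • x :=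
    fun a x => by rw [algebraMap_smul]
  refine ⟨fun i _ _ => ?_, fun i _ _ => ?_, fun i _ _ => ?_, fun i j _ hij _ => ?_⟩ <;>
    refine Finsupp.lhom_ext fun σ a => ?_ <;>
    simp only [hu, Module.End.mul_apply, LinearMap.smul_apply, matchingRep_single,
      Finsupp.smul_single, smul_eq_mul, Nat.cast_add, Nat.cast_one]
  · rw [surgery_eq_self (surgery_apply_self _ _), weight_of_eq (surgery_apply_self _ _), map_add,
      map_one]
  · rw [surgery_surgery_succ (surgery_apply_self _ _), weight_of_ne surgery_succ_apply_ne,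
      weight_of_ne surgery_apply_succ_ne, ← mul_assoc, hs]
  · rw [surgery_succ_surgery (surgery_apply_self _ _), weight_of_ne surgery_apply_succ_ne,
      weight_of_ne surgery_succ_apply_ne, ← mul_assoc, hs]
  · rw [surgery_comm (by omega), ← mul_assoc, ← mul_assoc,
      weight_surgery_of_far (Or.inl (by omega))]

lemma exists_prod_matchingRep_rainbow {u s : L} (hu : u + 1 ≠ 0) (hs : s ≠ 0) (w : List ℕ) :
    ∃ c ≠ 0, (w.map (matchingRep u s)).prod (Finsupp.single rainbow 1) =
      Finsupp.single (act w rainbow) c := by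
  induction w with
  | nil => exact ⟨1, one_ne_zero, by simp [act_nil]⟩
  | cons i w ih =>
    obtain ⟨c, hc, e⟩ := ih
    refine ⟨weight u s i (act w rainbow) * c, mul_ne_zero (weight_ne_zero hu hs _ _) hc, ?_⟩
    rw [List.map_cons, List.prod_cons, Module.End.mul_apply, e, matchingRep_single, act_cons]

lemma linearIndependent_prod_matchingRep (F : Type*) [Field F] [Algebra F L] {u s : L}
    (hu : u + 1 ≠ 0) (hs : s ≠ 0) (m : ℕ) :
    LinearIndependent F fun w : allWords m => (w.1.map (matchingRep u s)).prod := by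
  choose c hc e using exists_prod_matchingRep_rainbow hu hs
  refine LinearIndependent.restrict_scalars (R := F) (K := L) (smul_left_injective F one_ne_zero) ?_
  refine LinearIndependent.of_comp (LinearMap.applyₗ (Finsupp.single rainbow (1 : L))) ?_
  have inj : Function.Injective fun w : allWords m => act w.1 rainbow := by
    intro w w' h
    obtain ⟨j, hj⟩ := mem_allWords.1 w.2
    obtain ⟨j', hj'⟩ := mem_allWords.1 w'.2
    exact Subtype.ext (act_rainbow_injective hj hj' h)
  have := ((Finsupp.linearIndependent_single_of_ne_zero (R := L) (v := fun _ : Matching => (1 : L))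
    fun _ => one_ne_zero).comp _ inj).units_smul fun w : allWords m => Units.mk0 _ (hc w.1)
  convert this using 1
  · ext w : 1
    simp [e, Units.smul_def]
  · rfl

end Representation

end TemperleyLieb

namespace YokonumaTL

open Finset

/-- The transposition `(i, i + 1)` of `ℕ`. -/
abbrev sw (i : ℕ) : Equiv.Perm ℕ := Equiv.swap i (i + 1)

lemma sw_lt {n i p : ℕ} (hi : i + 1 < n) (hp : p < n) : sw i p < n := by
  rw [Equiv.swap_apply_def]
  split_ifs <;> omega

lemma sw_apply_of_ne {i p : ℕ} (h : p ≠ i) (h' : p ≠ i + 1) : sw i p = p :=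
  Equiv.swap_apply_of_ne_of_ne h h'

section Relations

variable {F A : Type*} [Field F] [Ring A] [Algebra F A]

variable (F) in
/-- The element `e_i` built from the elements `t i` and `t (i + 1)`. -/
def eElt (d : ℕ) (t : ℕ → A) (i : ℕ) : A :=
  (d : F)⁻¹ • ∑ s ∈ range d, t i ^ s * t (i + 1) ^ (d - s)

/-- The relations of the Yokonuma–Temperley–Lieb algebra, with indices shifted so that the
generators are `g 0, …, g (n - 2)` and `t 0, …, t (n - 1)`. -/
structure YTLRelations (d n : ℕ) (u : F) (g t : ℕ → A) : Prop where
  comm : ∀ i j, i + 1 < j → j + 1 < n → g i * g j = g j * g i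
  braid : ∀ i, i + 2 < n → g i * g (i + 1) * g i = g (i + 1) * g i * g (i + 1)
  tcomm : ∀ p q, p < n → q < n → t p * t q = t q * t p
  tg : ∀ i p, i + 1 < n → p < n → t p * g i = g i * t (sw i p)
  tpow : ∀ p, p < n → t p ^ d = 1
  quad : ∀ i, i + 1 < n →
    g i * g i = 1 + (u - 1) • eElt F d t i + (u - 1) • (eElt F d t i * g i)
  tl : ∀ i, i + 2 < n →
    g i * g (i + 1) * g i + g i * g (i + 1) + g (i + 1) * g i + g i + g (i + 1) + 1 = 0

end Relations

section Weights

variable {F A M : Type*} [Field F] [Ring A] [Algebra F A] [AddCommGroup M] [Module F M]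
  [Module A M] [IsScalarTower F A M]

/-- The vector `y` is a simultaneous eigenvector of `t 0, …, t (n - 1)` with eigenvalues
`ζ ^ χ 0, …, ζ ^ χ (n - 1)`. -/
def HasWeight {d : ℕ} (n : ℕ) (ζ : F) (t : ℕ → A) (χ : ℕ → Fin d) (y : M) : Prop :=
  ∀ p < n, t p • y = ζ ^ (χ p : ℕ) • y

/-- The idempotent projecting to the `ζ ^ a`-eigenspace of `x`, where `x ^ d = 1`. -/
def eigenIdem {d : ℕ} (ζ : F) (x : A) (a : Fin d) : A :=
  (d : F)⁻¹ • ∑ s ∈ range d, (ζ ^ (a : ℕ))⁻¹ ^ s • x ^ s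

/-- The idempotent projecting to the simultaneous eigenspace of weight `χ`. -/
def weightIdem {d : ℕ} (ζ : F) (t : ℕ → A) (χ : ℕ → Fin d) : ℕ → A
  | 0 => 1
  | m + 1 => eigenIdem ζ (t m) (χ m) * weightIdem ζ t χ m

lemma smul_smul_swap (x : A) (a : F) (y : M) : x • a • y = a • x • y := by
  have : SMulCommClass F A M := IsScalarTower.to_smulCommClass
  exact (smul_comm a x y).symm

lemma pow_smul_of_smul_eq {x : A} {a : F} {y : M} (h : x • y = a • y) (s : ℕ) :
    x ^ s • y = a ^ s • y := by
  induction s with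
  | zero => simp
  | succ s ih => rw [pow_succ, mul_smul, h, smul_smul_swap, ih, smul_smul, mul_comm, pow_succ]

variable {d : ℕ} [NeZero d] {ζ : F}

lemma sum_ratio_pow (hζ : IsPrimitiveRoot ζ d) (a b : Fin d) :
    ∑ s ∈ range d, (ζ ^ (a : ℕ) * (ζ ^ (b : ℕ))⁻¹) ^ s = if a = b then (d : F) else 0 := by
  have hζ0 : ζ ≠ 0 := hζ.ne_zero (NeZero.ne d)
  split_ifs with h
  · subst h
    rw [mul_inv_cancel₀ (pow_ne_zero _ hζ0)]
    simp
  · have h₁ : ζ ^ (a : ℕ) * (ζ ^ (b : ℕ))⁻¹ ≠ 1 := by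
      rw [Ne, mul_inv_eq_one₀ (pow_ne_zero _ hζ0)]
      exact fun e => h (Fin.ext (hζ.pow_inj a.2 b.2 e))
    rw [geom_sum_eq h₁, mul_pow, inv_pow, pow_right_comm, pow_right_comm ζ (b : ℕ), hζ.pow_eq_one]
    simp

lemma mul_eigenIdem (hζ : IsPrimitiveRoot ζ d) {x : A} (hx : x ^ d = 1) (a : Fin d) :
    x * eigenIdem ζ x a = ζ ^ (a : ℕ) • eigenIdem ζ x a := by
  have hζ0 : ζ ^ (a : ℕ) ≠ 0 := pow_ne_zero _ (hζ.ne_zero (NeZero.ne d))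
  have e : ∀ s, x * ((ζ ^ (a : ℕ))⁻¹ ^ s • x ^ s) =
      ζ ^ (a : ℕ) • ((ζ ^ (a : ℕ))⁻¹ ^ (s + 1) • x ^ (s + 1)) := by
    intro s
    rw [mul_smul_comm, ← pow_succ', smul_smul,
      pow_succ' (ζ ^ (a : ℕ))⁻¹ s, mul_inv_cancel_left₀ hζ0]
  rw [eigenIdem, mul_smul_comm, smul_comm (ζ ^ (a : ℕ)), mul_sum, sum_congr rfl fun s _ => e s,
    ← smul_sum]
  congr 2
  have h₁ := sum_range_succ (fun s => (ζ ^ (a : ℕ))⁻¹ ^ s • x ^ s) d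
  have h₂ := sum_range_succ' (fun s => (ζ ^ (a : ℕ))⁻¹ ^ s • x ^ s) d
  rw [hx, inv_pow, pow_right_comm, hζ.pow_eq_one, one_pow, inv_one] at h₁
  rw [pow_zero, pow_zero] at h₂
  exact add_right_cancel (h₂.symm.trans h₁)

variable [CharZero F]

lemma eigenIdem_smul (hζ : IsPrimitiveRoot ζ d) {x : A} {a b : Fin d} {y : M}
    (h : x • y = ζ ^ (b : ℕ) • y) : eigenIdem ζ x a • y = if b = a then y else 0 := by
  have hd : (d : F) ≠ 0 := NeZero.ne _
  have e : ∀ s ∈ range d, ((ζ ^ (a : ℕ))⁻¹ ^ s • x ^ s) • y =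
      (ζ ^ (b : ℕ) * (ζ ^ (a : ℕ))⁻¹) ^ s • y := by
    intro s _
    rw [smul_assoc, pow_smul_of_smul_eq h, smul_smul, mul_pow, mul_comm]
  rw [eigenIdem, smul_assoc, sum_smul, sum_congr rfl e, ← sum_smul, sum_ratio_pow hζ]
  split_ifs
  · rw [smul_smul, inv_mul_cancel₀ hd, one_smul]
  · rw [zero_smul, smul_zero]

lemma eElt_smul (hζ : IsPrimitiveRoot ζ d) {t : ℕ → A} {i : ℕ} {a b : Fin d} {y : M}
    (h : t i • y = ζ ^ (a : ℕ) • y) (h' : t (i + 1) • y = ζ ^ (b : ℕ) • y) :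
    eElt F d t i • y = if a = b then y else 0 := by
  have hd : (d : F) ≠ 0 := NeZero.ne _
  have hζ0 : ζ ≠ 0 := hζ.ne_zero (NeZero.ne d)
  have e : ∀ s ∈ range d, (t i ^ s * t (i + 1) ^ (d - s)) • y =
      (ζ ^ (a : ℕ) * (ζ ^ (b : ℕ))⁻¹) ^ s • y := by
    intro s hs
    have : (ζ ^ (b : ℕ)) ^ (d - s) = (ζ ^ (b : ℕ))⁻¹ ^ s := by
      rw [inv_pow]
      refine eq_inv_of_mul_eq_one_left ?_
      rw [← pow_add,
        Nat.sub_add_cancel (mem_range.1 hs).le, pow_right_comm, hζ.pow_eq_one, one_pow]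
    rw [mul_smul, pow_smul_of_smul_eq h', smul_smul_swap, pow_smul_of_smul_eq h, smul_smul, this,
      mul_pow, mul_comm]
  rw [eElt, smul_assoc, sum_smul, sum_congr rfl e, ← sum_smul, sum_ratio_pow hζ]
  split_ifs
  · rw [smul_smul, inv_mul_cancel₀ hd, one_smul]
  · rw [zero_smul, smul_zero]

lemma sum_eigenIdem (hζ : IsPrimitiveRoot ζ d) (x : A) : ∑ a : Fin d, eigenIdem ζ x a = 1 := by
  have hd : (d : F) ≠ 0 := NeZero.ne _
  have e : ∀ s ∈ range d, ∑ a : Fin d, (ζ ^ (a : ℕ))⁻¹ ^ s • x ^ s =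
      if s = 0 then (d : F) • (1 : A) else 0 := by
    intro s hs
    have h := sum_ratio_pow hζ 0 ⟨s, mem_range.1 hs⟩
    rw [← Fin.sum_univ_eq_sum_range (fun j => _ ^ j) d] at h
    rw [← sum_smul]
    have : ∑ a : Fin d, (ζ ^ (a : ℕ))⁻¹ ^ s =
        ∑ a : Fin d, (ζ ^ ((0 : Fin d) : ℕ) * (ζ ^ s)⁻¹) ^ (a : ℕ) := by
      refine sum_congr rfl fun a _ => ?_
      rw [Fin.val_zero, pow_zero, one_mul, inv_pow, inv_pow, pow_right_comm]
    rw [this, h]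
    by_cases hs0 : s = 0
    · subst hs0
      simp
    · rw [if_neg hs0, if_neg (fun e => hs0 (congrArg Fin.val e).symm), zero_smul]
  simp only [eigenIdem]
  rw [← smul_sum, sum_comm, sum_congr rfl e, sum_ite_eq', if_pos (mem_range.2 (NeZero.pos d)),
    smul_smul, inv_mul_cancel₀ hd, one_smul]

end Weights

section Decomposition

variable {F A : Type*} [Field F] [Ring A] [Algebra F A]

variable (F) in
/-- The left ideal `A e`, as a subspace. -/
def leftIdeal (e : A) : Submodule F A := LinearMap.range (LinearMap.mulRight F e)

lemma mem_leftIdeal {e x : A} : x ∈ leftIdeal F e ↔ ∃ y, y * e = x := Iff.rfl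

lemma mul_mem_leftIdeal (x e : A) : x * e ∈ leftIdeal F e := ⟨x, rfl⟩

lemma mul_idem_of_mem_leftIdeal {e x : A} (he : e * e = e) (hx : x ∈ leftIdeal F e) :
    x * e = x := by
  obtain ⟨y, rfl⟩ := mem_leftIdeal.1 hx
  rw [mul_assoc, he]

variable (F) in
/-- A complete family of orthogonal idempotents decomposes an algebra into left ideals. -/
noncomputable def equivPiLeftIdeal {ι : Type*} [Fintype ι] {e : ι → A}
    (he : CompleteOrthogonalIdempotents e) : A ≃ₗ[F] (i : ι) → leftIdeal F (e i) where
  toFun x i := ⟨x * e i, mul_mem_leftIdeal x (e i)⟩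
  invFun y := ∑ i, (y i : A)
  map_add' x y := by ext i; simp [add_mul]
  map_smul' a x := by ext i; simp
  left_inv x := by simp [← mul_sum, he.complete]
  right_inv y := by
    ext i
    change (∑ j, (y j : A)) * e i = y i
    rw [sum_mul, sum_eq_single i]
    · exact mul_idem_of_mem_leftIdeal (he.idem i) (y i).2
    · intro j _ hj
      rw [← mul_idem_of_mem_leftIdeal (he.idem j) (y j).2, mul_assoc, he.ortho hj, mul_zero]
    · simp

lemma finiteDimensional_of_leftIdeal {ι : Type*} [Fintype ι] {e : ι → A}
    (he : CompleteOrthogonalIdempotents e) (h : ∀ i, FiniteDimensional F (leftIdeal F (e i))) :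
    FiniteDimensional F A :=
  (equivPiLeftIdeal F he).symm.finiteDimensional

lemma finrank_eq_sum_leftIdeal {ι : Type*} [Fintype ι] {e : ι → A}
    (he : CompleteOrthogonalIdempotents e) (h : ∀ i, FiniteDimensional F (leftIdeal F (e i))) :
    Module.finrank F A = ∑ i, Module.finrank F (leftIdeal F (e i)) := by
  rw [(equivPiLeftIdeal F he).finrank_eq, Module.finrank_pi_fintype]

end Decomposition

section Weights

variable {F A M : Type*} [Field F] [Ring A] [Algebra F A] [AddCommGroup M] [Module F M]
  [Module A M] [IsScalarTower F A M] {d n : ℕ} [NeZero d] [CharZero F] {ζ u : F} {g t : ℕ → A}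
  {χ χ' : ℕ → Fin d}

lemma HasWeight.weightIdem_smul (hζ : IsPrimitiveRoot ζ d) {y : M} (hy : HasWeight n ζ t χ y)
    {m : ℕ} (hm : m ≤ n) (h : ∀ p < m, χ p = χ' p) : weightIdem ζ t χ' m • y = y := by
  induction m with
  | zero => simp [weightIdem]
  | succ m ih =>
    rw [weightIdem, mul_smul, ih (by omega) fun p hp => h p (by omega),
      eigenIdem_smul hζ (hy m (by omega)), if_pos (h m (by omega))]

lemma HasWeight.weightIdem_smul_eq_zero (hζ : IsPrimitiveRoot ζ d) {y : M}
    (hy : HasWeight n ζ t χ y) {m p : ℕ} (hm : m ≤ n) (hp : p < m) (h : χ p ≠ χ' p) :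
    weightIdem ζ t χ' m • y = 0 := by
  by_cases hmin : ∀ q < p, χ q = χ' q
  · induction m with
    | zero => omega
    | succ m ih =>
      rw [weightIdem, mul_smul]
      rcases Nat.lt_or_ge p m with hpm | hpm
      · rw [ih (by omega) hpm, smul_zero]
      · obtain rfl : p = m := by omega
        rw [hy.weightIdem_smul hζ (by omega) hmin, eigenIdem_smul hζ (hy p (by omega)), if_neg h]
  · push Not at hmin
    obtain ⟨q, hq, hne⟩ := hmin
    exact hy.weightIdem_smul_eq_zero hζ hm (hq.trans hp) hne
termination_by p

lemma weightIdem_congr {m : ℕ} (h : ∀ p < m, χ p = χ' p) :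
    weightIdem ζ t χ m = weightIdem ζ t χ' m := by
  induction m with
  | zero => rfl
  | succ m ih => rw [weightIdem, weightIdem, ih fun p hp => h p (by omega), h m (by omega)]

/-- Extension of a function on `Fin n` to `ℕ`. -/
def extend (χ : Fin n → Fin d) (p : ℕ) : Fin d := if h : p < n then χ ⟨p, h⟩ else 0

lemma extend_apply (χ : Fin n → Fin d) (p : Fin n) : extend χ p = χ p := by
  simp [extend]

lemma sum_weightIdem (hζ : IsPrimitiveRoot ζ d) (t : ℕ → A) (m : ℕ) :
    ∑ χ : Fin m → Fin d, weightIdem ζ t (extend χ) m = 1 := by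
  induction m with
  | zero => simp [weightIdem]
  | succ m ih =>
    have e : ∀ (a : Fin d) (χ : Fin m → Fin d),
        weightIdem ζ t (extend (Fin.snoc (α := fun _ => Fin d) χ a)) (m + 1) =
          eigenIdem ζ (t m) a * weightIdem ζ t (extend χ) m := by
      intro a χ
      have h₁ : extend (Fin.snoc (α := fun _ => Fin d) χ a) m = a := by
        simpa using extend_apply (Fin.snoc (α := fun _ => Fin d) χ a) (Fin.last m)
      rw [weightIdem, h₁]
      congr 1
      refine weightIdem_congr fun p hp => ?_
      have := extend_apply (Fin.snoc (α := fun _ => Fin d) χ a) (Fin.castSucc ⟨p, hp⟩)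
      rw [Fin.snoc_castSucc] at this
      simpa [extend, hp] using this
    rw [← (Fin.snocEquiv fun _ => Fin d).sum_comp, Fintype.sum_prod_type]
    simp only [Fin.snocEquiv, Equiv.coe_fn_mk, e, ← mul_sum, ih, mul_one, sum_eigenIdem hζ]

namespace YTLRelations

section

variable (h : YTLRelations d n u g t)
include h

lemma commute_eigenIdem {p q : ℕ} (hp : p < n) (hq : q < n) (a : Fin d) :
    Commute (t p) (eigenIdem ζ (t q) a) := by
  have h₁ : Commute (t p) (t q) := h.tcomm p q hp hq
  exact (Commute.sum_right _ _ _ fun s _ => (h₁.pow_right s).smul_right _).smul_right _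

lemma hasWeight_weightIdem (hζ : IsPrimitiveRoot ζ d) (χ : ℕ → Fin d) {m : ℕ} (hm : m ≤ n) :
    HasWeight m ζ t χ (weightIdem ζ t χ m) := by
  induction m with
  | zero => intro p hp; omega
  | succ m ih =>
    intro p hp
    rw [weightIdem, smul_eq_mul, ← mul_assoc]
    rcases Nat.lt_or_ge p m with hpm | hpm
    · have := ih (by omega) p hpm
      rw [smul_eq_mul] at this
      rw [(h.commute_eigenIdem (by omega) (by omega) _).eq, mul_assoc, this, mul_smul_comm]
    · obtain rfl : p = m := by omega
      rw [mul_eigenIdem hζ (h.tpow p (by omega)), smul_mul_assoc]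

lemma hasWeight_smul {y : M} (hy : HasWeight n ζ t χ y) {i : ℕ} (hi : i + 1 < n) :
    HasWeight n ζ t (χ ∘ sw i) (g i • y) := fun p hp => by
  rw [← mul_smul, h.tg i p hi hp, mul_smul, hy _ (sw_lt hi hp), smul_smul_swap]
  rfl

lemma g_g_smul_of_eq (hζ : IsPrimitiveRoot ζ d) {y : M} (hy : HasWeight n ζ t χ y) {i : ℕ}
    (hi : i + 1 < n) (hχ : χ i = χ (i + 1)) : g i • g i • y = u • y + (u - 1) • g i • y := by
  have hw := h.hasWeight_smul hy hi
  rw [← mul_smul, h.quad i hi, add_smul, add_smul, one_smul, smul_assoc, smul_assoc, mul_smul,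
    eElt_smul hζ (hy i (by omega)) (hy (i + 1) hi),
    eElt_smul hζ (hw i (by omega)) (hw (i + 1) hi), if_pos hχ, if_pos (by simp [hχ]), sub_smul u,
    one_smul, add_sub_cancel]

lemma g_g_smul_of_ne (hζ : IsPrimitiveRoot ζ d) {y : M} (hy : HasWeight n ζ t χ y) {i : ℕ}
    (hi : i + 1 < n) (hχ : χ i ≠ χ (i + 1)) : g i • g i • y = y := by
  have hw := h.hasWeight_smul hy hi
  rw [← mul_smul, h.quad i hi, add_smul, add_smul, one_smul, smul_assoc, smul_assoc, mul_smul,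
    eElt_smul hζ (hy i (by omega)) (hy (i + 1) hi),
    eElt_smul hζ (hw i (by omega)) (hw (i + 1) hi), if_neg hχ, if_neg (by simpa using hχ.symm)]
  simp

lemma weightIdem_mul_self (hζ : IsPrimitiveRoot ζ d) (χ : ℕ → Fin d) :
    weightIdem ζ t χ n * weightIdem ζ t χ n = weightIdem ζ t χ n :=
  (h.hasWeight_weightIdem hζ χ le_rfl).weightIdem_smul hζ le_rfl fun _ _ => rfl

lemma completeOrthogonalIdempotents (hζ : IsPrimitiveRoot ζ d) :
    CompleteOrthogonalIdempotents fun χ : Fin n → Fin d => weightIdem ζ t (extend χ) n where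
  idem χ := h.weightIdem_mul_self hζ _
  ortho χ χ' hne := by
    obtain ⟨p, hp⟩ := Function.ne_iff.1 hne
    refine (h.hasWeight_weightIdem hζ (extend χ') le_rfl).weightIdem_smul_eq_zero hζ le_rfl p.2 ?_
    rw [extend_apply, extend_apply]
    exact hp.symm
  complete := sum_weightIdem hζ t n

lemma weightIdem_sw_mul (hζ : IsPrimitiveRoot ζ d) (χ : ℕ → Fin d) {i : ℕ} (hi : i + 1 < n) :
    weightIdem ζ t (χ ∘ sw i) n * (g i * weightIdem ζ t χ n) = g i * weightIdem ζ t χ n :=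
  (h.hasWeight_smul (h.hasWeight_weightIdem hζ χ le_rfl) hi).weightIdem_smul hζ le_rfl
    fun _ _ => rfl

lemma g_mul_g_mul_weightIdem (hζ : IsPrimitiveRoot ζ d) {i : ℕ} (hi : i + 1 < n)
    (hχ : χ i ≠ χ (i + 1)) : g i * (g i * weightIdem ζ t χ n) = weightIdem ζ t χ n :=
  h.g_g_smul_of_ne hζ (h.hasWeight_weightIdem hζ χ le_rfl) hi hχ

/-- The left ideals of weights differing by a transposition are isomorphic. -/
lemma nonempty_leftIdeal_equiv (hζ : IsPrimitiveRoot ζ d) {i : ℕ} (hi : i + 1 < n)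
    (hχ : χ i ≠ χ (i + 1)) :
    Nonempty (leftIdeal F (weightIdem ζ t χ n) ≃ₗ[F]
      leftIdeal F (weightIdem ζ t (χ ∘ sw i) n)) := by
  have key : ∀ χ : ℕ → Fin d, χ i ≠ χ (i + 1) → ∀ x ∈ leftIdeal F (weightIdem ζ t χ n),
      x * g i * weightIdem ζ t (χ ∘ sw i) n * g i * weightIdem ζ t χ n = x := by
    intro χ hχ x hx
    rw [mul_assoc, mul_assoc, h.weightIdem_sw_mul hζ χ hi, mul_assoc,
      h.g_mul_g_mul_weightIdem hζ hi hχ,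
      mul_idem_of_mem_leftIdeal (h.weightIdem_mul_self hζ χ) hx]
  have hsw : (χ ∘ sw i) ∘ sw i = χ := by ext; simp
  have key' := key (χ ∘ sw i) (by simpa using hχ.symm)
  rw [hsw] at key'
  exact ⟨{
    toFun := fun x => ⟨x * g i * weightIdem ζ t (χ ∘ sw i) n, mul_mem_leftIdeal _ _⟩
    invFun := fun x => ⟨x * g i * weightIdem ζ t χ n, mul_mem_leftIdeal _ _⟩
    map_add' := fun x y => by ext; simp [add_mul]
    map_smul' := fun a x => by ext; simp
    left_inv := fun x => Subtype.ext (key χ hχ x x.2)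
    right_inv := fun x => Subtype.ext (key' x x.2) }⟩

lemma weightIdem_eq_zero_of_sw (hζ : IsPrimitiveRoot ζ d) {i : ℕ} (hi : i + 1 < n)
    (h0 : weightIdem ζ t (χ ∘ sw i) n = 0) : weightIdem ζ t χ n = 0 := by
  by_cases hχ : χ i = χ (i + 1)
  · rwa [show χ ∘ sw i = χ by
      ext p
      simp only [Function.comp_apply, Equiv.swap_apply_def]
      split_ifs <;> simp_all] at h0
  · rw [← h.g_mul_g_mul_weightIdem hζ hi hχ, ← h.weightIdem_sw_mul hζ χ hi, h0, zero_mul, mul_zero]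

end

end YTLRelations

end Weights

lemma add_mul_eq_zero_of_braid {F A : Type*} [Field F] [Ring A] [Algebra F A] {u : F} (hu : u ≠ 0)
    {a b e : A} (h₁ : e + b * e = 0) (h₂ : e * (a * e) = a * e)
    (h₃ : a * b * a * e = b * a * b * e) (h₄ : a * (a * e) = u • e + (u - 1) • (a * e)) :
    e + a * e = 0 := by
  have h₁' : b * e = -e := by rw [eq_neg_iff_add_eq_zero, add_comm, h₁]
  have h₅ : b * (a * e) = -(a * e) := by
    rw [← h₂, ← mul_assoc, h₁', neg_mul]
  simp only [mul_assoc, h₁', h₅, mul_neg, neg_neg] at h₃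
  rw [h₄] at h₃
  have : u • (e + a * e) = 0 := by
    have h₆ : u • (e + a * e) = a * e + (u • e + (u - 1) • (a * e)) := by module
    rw [h₆]
    exact add_eq_zero_iff_eq_neg.2 h₃.symm
  exact (smul_eq_zero.1 this).resolve_left hu

section Vanishing

variable {F A : Type*} [Field F] [Ring A] [Algebra F A] {d n : ℕ} [NeZero d] [CharZero F]
  {ζ u : F} {g t : ℕ → A} {χ : ℕ → Fin d}

namespace YTLRelations

section

variable (h : YTLRelations d n u g t)
include h

/-- The Temperley–Lieb relation restricted to a weight space in which the value at `i` differs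
from the value at `i + 2`. -/
lemma tl_weightIdem (hζ : IsPrimitiveRoot ζ d) {i : ℕ} (hi : i + 2 < n)
    (hχ : χ i ≠ χ (i + 2)) :
    weightIdem ζ t χ n + weightIdem ζ t χ n * (g i * weightIdem ζ t χ n) +
      weightIdem ζ t χ n * (g (i + 1) * weightIdem ζ t χ n) = 0 := by
  have w := h.hasWeight_weightIdem hζ χ le_rfl
  have w₁ := h.hasWeight_smul w (show i + 1 < n by omega)
  have w₂ := h.hasWeight_smul w (show i + 1 + 1 < n by omega)
  have w₁₂ := h.hasWeight_smul w₁ (show i + 1 + 1 < n by omega)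
  have w₂₁ := h.hasWeight_smul w₂ (show i + 1 < n by omega)
  have w₁₂₁ := h.hasWeight_smul w₁₂ (show i + 1 < n by omega)
  have s₁ : sw i (i + 2) = i + 2 := sw_apply_of_ne (by omega) (by omega)
  have s₂ : sw (i + 1) i = i := sw_apply_of_ne (by omega) (by omega)
  have s₃ : sw (i + 1) (i + 1) = i + 2 := Equiv.swap_apply_left _ _
  have z₂₁ := w₂₁.weightIdem_smul_eq_zero (χ' := χ) hζ le_rfl (show i < n by omega)
    (by simpa [s₁, s₂, s₃] using hχ.symm)
  have z₁₂₁ := w₁₂₁.weightIdem_smul_eq_zero (χ' := χ) hζ le_rfl (show i < n by omega)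
    (by simpa [s₁, s₂, s₃] using hχ.symm)
  have z₁₂ : weightIdem ζ t χ n * (g (i + 1) * (g i * weightIdem ζ t χ n)) = 0 := by
    by_cases he : χ (i + 1) = χ i
    · exact w₁₂.weightIdem_smul_eq_zero hζ le_rfl (show i + 1 < n by omega)
        (by simpa [s₁, s₂, s₃, he] using hχ.symm)
    · exact w₁₂.weightIdem_smul_eq_zero hζ le_rfl (show i < n by omega) (by simpa [s₁, s₂, s₃] using he)
  have e := congrArg (fun x => weightIdem ζ t χ n * (x * weightIdem ζ t χ n)) (h.tl i hi)
  simp only [smul_eq_mul] at z₂₁ z₁₂₁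
  simp only [add_mul, mul_add, mul_assoc, z₂₁, z₁₂₁, z₁₂, one_mul, zero_mul, mul_zero, zero_add,
    h.weightIdem_mul_self hζ χ] at e
  rw [← e]
  abel

lemma weightIdem_mul_g_mul_of_ne (hζ : IsPrimitiveRoot ζ d) {i : ℕ} (hi : i + 1 < n)
    (hχ : χ i ≠ χ (i + 1)) : weightIdem ζ t χ n * (g i * weightIdem ζ t χ n) = 0 :=
  (h.hasWeight_smul (h.hasWeight_weightIdem hζ χ le_rfl) hi).weightIdem_smul_eq_zero hζ le_rfl
    (show i < n by omega) (by simpa using hχ.symm)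

lemma weightIdem_mul_g_mul_of_eq (hζ : IsPrimitiveRoot ζ d) {i : ℕ} (hi : i + 1 < n)
    (hχ : χ i = χ (i + 1)) :
    weightIdem ζ t χ n * (g i * weightIdem ζ t χ n) = g i * weightIdem ζ t χ n := by
  have := h.weightIdem_sw_mul hζ χ hi
  rwa [show χ ∘ sw i = χ by
      ext p
      simp only [Function.comp_apply, Equiv.swap_apply_def]
      split_ifs <;> simp_all] at this

/-- A weight taking three distinct values does not occur. -/
lemma weightIdem_eq_zero (hζ : IsPrimitiveRoot ζ d) {p q r : ℕ} (hpq : p < q) (hqr : q < r)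
    (hr : r < n) (h₁ : χ p ≠ χ q) (h₂ : χ q ≠ χ r) (h₃ : χ p ≠ χ r) :
    weightIdem ζ t χ n = 0 := by
  induction hm : r - p using Nat.strong_induction_on generalizing χ p q r with | _ m ih
  rcases Nat.lt_or_ge (p + 1) q with hp | hp
  · refine h.weightIdem_eq_zero_of_sw hζ (show p + 1 < n by omega) ?_
    have e₁ : sw p q = q := sw_apply_of_ne (by omega) (by omega)
    have e₂ : sw p r = r := sw_apply_of_ne (by omega) (by omega)
    exact ih (r - (p + 1)) (by omega) hp hqr hr (by simpa [e₁] using h₁)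
      (by simpa [e₁, e₂] using h₂) (by simpa [e₂] using h₃) rfl
  · obtain rfl : q = p + 1 := by omega
    rcases Nat.lt_or_ge (p + 2) r with hr' | hr'
    · obtain ⟨s, rfl⟩ : ∃ s, r = s + 1 := ⟨r - 1, by omega⟩
      refine h.weightIdem_eq_zero_of_sw hζ hr ?_
      have e₁ : sw s p = p := sw_apply_of_ne (by omega) (by omega)
      have e₂ : sw s (p + 1) = p + 1 := sw_apply_of_ne (by omega) (by omega)
      exact ih (s - p) (by omega) hpq (show p + 1 < s by omega) (by omega)
        (by simpa [e₁, e₂] using h₁) (by simpa [e₂] using h₂) (by simpa [e₁] using h₃) rfl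
    · obtain rfl : r = p + 2 := by omega
      have e := h.tl_weightIdem hζ hr h₃
      rwa [h.weightIdem_mul_g_mul_of_ne hζ (by omega) h₁,
        h.weightIdem_mul_g_mul_of_ne hζ (by omega) h₂, add_zero, add_zero] at e

lemma add_g_mul_weightIdem_of_right (hζ : IsPrimitiveRoot ζ d) (hu : u ≠ 0) (c i : ℕ)
    (hi : i + 2 + c < n) (hχ : ∀ p, i < p → p < i + 2 + c → χ p = χ i)
    (hne : χ (i + 2 + c) ≠ χ i) :
    weightIdem ζ t χ n + g i * weightIdem ζ t χ n = 0 := by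
  have h₁ : χ i = χ (i + 1) := (hχ (i + 1) (by omega) (by omega)).symm
  induction c generalizing i with
  | zero =>
    have e := h.tl_weightIdem hζ hi hne.symm
    rwa [h.weightIdem_mul_g_mul_of_eq hζ (by omega) h₁,
      h.weightIdem_mul_g_mul_of_ne hζ (by omega) (h₁ ▸ hne.symm), add_zero] at e
  | succ c ih =>
    have h₂ : χ (i + 2) = χ i := hχ (i + 2) (by omega) (by omega)
    have ih := ih (i + 1) (by omega) (fun p _ _ => (hχ p (by omega) (by omega)).trans h₁)
      (by rw [show i + 1 + 2 + c = i + 2 + (c + 1) by ring, ← h₁]; exact hne) (h₁.symm.trans h₂.symm)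
    have b := congrArg (· * weightIdem ζ t χ n) (h.braid i (by omega))
    have q := h.g_g_smul_of_eq hζ (h.hasWeight_weightIdem hζ χ le_rfl) (show i + 1 < n by omega) h₁
    exact add_mul_eq_zero_of_braid hu ih (h.weightIdem_mul_g_mul_of_eq hζ (by omega) h₁) b q

lemma add_g_mul_weightIdem_of_left (hζ : IsPrimitiveRoot ζ d) (hu : u ≠ 0) (c i : ℕ)
    (hi : i + 2 + c < n) (hχ : ∀ p, i < p → p < i + 2 + c → χ p = χ (i + 2 + c))
    (hne : χ i ≠ χ (i + 2 + c)) :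
    weightIdem ζ t χ n + g (i + 1 + c) * weightIdem ζ t χ n = 0 := by
  have h₁ : χ (i + 1 + c) = χ (i + 2 + c) := hχ (i + 1 + c) (by omega) (by omega)
  have h₁' : χ (i + 1 + c) = χ (i + 1 + c + 1) := by rw [h₁]; congr 1; ring
  induction c with
  | zero =>
    have e := h.tl_weightIdem hζ hi hne
    rwa [h.weightIdem_mul_g_mul_of_eq hζ (i := i + 1) (by omega) h₁,
      h.weightIdem_mul_g_mul_of_ne hζ (by omega) (h₁ ▸ hne), add_zero] at e
  | succ c ih =>
    have h₂ : χ (i + 1 + c) = χ (i + 2 + (c + 1)) := hχ (i + 1 + c) (by omega) (by omega)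
    have e₁ : i + 1 + (c + 1) = i + 1 + c + 1 := by ring
    have e₂ : i + 1 + (c + 1) = i + 2 + c := by ring
    rw [e₂] at h₁
    have ih := ih (by omega) (fun p _ _ => (hχ p (by omega) (by omega)).trans h₁.symm)
      (by rw [h₁]; exact hne) (h₂.trans h₁.symm)
      (by rw [← e₁, e₂]; exact h₂.trans h₁.symm)
    have b := congrArg (· * weightIdem ζ t χ n) (h.braid (i + 1 + c) (by omega)).symm
    have q := h.g_g_smul_of_eq hζ (h.hasWeight_weightIdem hζ χ le_rfl)
      (show i + 1 + (c + 1) + 1 < n by omega) h₁'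
    exact add_mul_eq_zero_of_braid hu ih (h.weightIdem_mul_g_mul_of_eq hζ (by omega) h₁') b q

/-- On a nonconstant weight, `g i` acts by `-1` when the values at `i` and `i + 1` agree. -/
lemma add_g_mul_weightIdem (hζ : IsPrimitiveRoot ζ d) (hu : u ≠ 0) {i p : ℕ} (hi : i + 1 < n)
    (hp : p < n) (h₁ : χ i = χ (i + 1)) (hne : χ p ≠ χ i) :
    weightIdem ζ t χ n + g i * weightIdem ζ t χ n = 0 := by
  rcases Nat.lt_or_ge i p with hip | hip
  · have hex : ∃ q, i < q ∧ χ q ≠ χ i := ⟨p, hip, hne⟩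
    have hq := Nat.find_spec hex
    have hmin : ∀ r, i < r → r < Nat.find hex → χ r = χ i := fun r h₁ h₂ => by
      by_contra hr
      exact Nat.find_min hex h₂ ⟨h₁, hr⟩
    have hle : Nat.find hex ≤ p := Nat.find_min' hex ⟨hip, hne⟩
    have hne1 : Nat.find hex ≠ i + 1 := fun e => hq.2 (e ▸ h₁.symm)
    obtain ⟨c, hc⟩ : ∃ c, Nat.find hex = i + 2 + c :=
      ⟨Nat.find hex - (i + 2), by have := hq.1; omega⟩
    rw [hc] at hq hmin hle
    exact h.add_g_mul_weightIdem_of_right hζ hu c i (by omega) hmin hq.2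
  · have hpi : p < i := lt_of_le_of_ne hip fun e => hne (e ▸ rfl)
    have hex : ∃ c, c < i ∧ χ (i - 1 - c) ≠ χ i :=
      ⟨i - 1 - p, by omega, by rwa [show i - 1 - (i - 1 - p) = p by omega]⟩
    obtain ⟨hc, hcne⟩ := Nat.find_spec hex
    have hmin := fun {m} => Nat.find_min hex (m := m)
    generalize Nat.find hex = c at *
    obtain ⟨l, rfl⟩ : ∃ l, i = l + 1 + c := ⟨i - 1 - c, by omega⟩
    have e : l + 2 + c = l + 1 + c + 1 := by ring
    rw [show l + 1 + c - 1 - c = l by omega] at hcne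
    refine h.add_g_mul_weightIdem_of_left hζ hu c l (by omega) (fun r h₂ h₃ => ?_)
      (by rwa [e, ← h₁])
    rw [e, ← h₁]
    rcases Nat.lt_or_ge r (l + 1 + c) with hr | hr
    · by_contra hr'
      refine hmin (m := l + c - r) (by omega) ⟨by omega, ?_⟩
      rwa [show l + 1 + c - 1 - (l + c - r) = r by omega]
    · rw [show r = l + 1 + c by omega]

end

end YTLRelations

end Vanishing

/-- The image of a set of natural numbers under the transposition `(i, i + 1)`. -/
def swapSet (i : ℕ) (S : Finset ℕ) : Finset ℕ := S.map (sw i).toEmbedding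

lemma mem_swapSet {i p : ℕ} {S : Finset ℕ} : p ∈ swapSet i S ↔ sw i p ∈ S := by
  rw [swapSet, mem_map_equiv, Equiv.symm_swap]

lemma swapSet_swapSet (i : ℕ) (S : Finset ℕ) : swapSet i (swapSet i S) = S := by
  ext p
  simp [mem_swapSet]

lemma card_swapSet (i : ℕ) (S : Finset ℕ) : (swapSet i S).card = S.card := card_map _

lemma swapSet_subset_range {n i : ℕ} {S : Finset ℕ} (hi : i + 1 < n) (hS : S ⊆ range n) :
    swapSet i S ⊆ range n := fun p hp => by
  have := sw_lt hi (mem_range.1 (hS (mem_swapSet.1 hp)))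
  simpa using this

lemma swapSet_mem_powersetCard {n k i : ℕ} {S : Finset ℕ} (hi : i + 1 < n)
    (hS : S ∈ powersetCard k (range n)) : swapSet i S ∈ powersetCard k (range n) := by
  rw [mem_powersetCard] at *
  exact ⟨swapSet_subset_range hi hS.1, (card_swapSet i S).trans hS.2⟩

lemma swapSet_comm {i j : ℕ} (hij : i + 1 < j ∨ j + 1 < i) (S : Finset ℕ) :
    swapSet i (swapSet j S) = swapSet j (swapSet i S) := by
  ext p
  rw [mem_swapSet, mem_swapSet, mem_swapSet, mem_swapSet]
  have : sw j (sw i p) = sw i (sw j p) := by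
    simp only [Equiv.swap_apply_def]
    split_ifs <;> omega
  rw [this]

lemma swapSet_eq_self {i : ℕ} {S : Finset ℕ} (h : i ∈ S ↔ i + 1 ∈ S) : swapSet i S = S := by
  ext p
  rw [mem_swapSet, Equiv.swap_apply_def]
  split_ifs <;> simp_all

lemma sum_swapSet_lt {i : ℕ} {S : Finset ℕ} (h : i ∉ S ∧ i + 1 ∈ S) :
    ∑ p ∈ swapSet i S, p < ∑ p ∈ S, p := by
  rw [swapSet, sum_map]
  refine sum_lt_sum (fun p hp => ?_) ⟨i + 1, h.2, by simp⟩
  have : p ≠ i := fun e => h.1 (e ▸ hp)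
  simp only [Equiv.coe_toEmbedding, Equiv.swap_apply_def]
  split_ifs <;> omega

lemma eq_range_of_no_descent {S : Finset ℕ} (h : ¬∃ i, i ∉ S ∧ i + 1 ∈ S) : S = range S.card := by
  push Not at h
  have h' : ∀ p ∈ S, ∀ c ≤ p, p - c ∈ S := by
    intro p hp c
    induction c with
    | zero => simpa using hp
    | succ c ih =>
      intro hc
      by_contra hn
      exact h _ hn (by rw [show p - (c + 1) + 1 = p - c by omega]; exact ih (by omega))
  refine eq_of_subset_of_card_le (fun p hp => mem_range.2 ?_) (by simp)
  have : range (p + 1) ⊆ S := fun q hq => by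
    have := h' p hp (p - q) (by omega)
    rwa [Nat.sub_sub_self (by simpa [Nat.lt_succ_iff] using hq)] at this
  simpa using card_le_card this

/-- The two-valued weight with value `a` on `S` and `b` elsewhere. -/
def twoValued {d : ℕ} (a b : Fin d) (S : Finset ℕ) (p : ℕ) : Fin d := if p ∈ S then a else b

lemma twoValued_swapSet {d : ℕ} (a b : Fin d) (i : ℕ) (S : Finset ℕ) :
    twoValued a b (swapSet i S) = twoValued a b S ∘ sw i := by
  ext p
  simp [twoValued, mem_swapSet]

section Orbit

variable {F A : Type*} [Field F] [Ring A] [Algebra F A]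

open Classical in
/-- Starting from an initial segment of `ℕ`, reach the set `S` by adjacent transpositions, and
apply the corresponding generators to `e`. -/
noncomputable def orbitElt (g : ℕ → A) (e : A) (S : Finset ℕ) : A :=
  if h : ∃ i, i ∉ S ∧ i + 1 ∈ S then g h.choose * orbitElt g e (swapSet h.choose S) else e
termination_by ∑ p ∈ S, p
decreasing_by exact sum_swapSet_lt h.choose_spec

lemma orbitElt_range (g : ℕ → A) (e : A) (k : ℕ) : orbitElt g e (range k) = e := by
  rw [orbitElt, dif_neg]
  rintro ⟨i, h₁, h₂⟩
  simp only [mem_range] at h₁ h₂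
  omega

variable {d n k : ℕ} [NeZero d] [CharZero F] {ζ u : F} {g t : ℕ → A} {a b : Fin d}

lemma exists_orbitElt_eq {S : Finset ℕ} (hS : S ∈ powersetCard k (range n)) (g : ℕ → A) (e : A) :
    (S = range k ∧ orbitElt g e S = e) ∨ ∃ i, i + 1 < n ∧ (i ∉ S ∧ i + 1 ∈ S) ∧
      orbitElt g e S = g i * orbitElt g e (swapSet i S) := by
  rw [mem_powersetCard] at hS
  by_cases h : ∃ i, i ∉ S ∧ i + 1 ∈ S
  · refine Or.inr ⟨h.choose, mem_range.1 (hS.1 h.choose_spec.2), h.choose_spec, ?_⟩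
    rw [orbitElt, dif_pos h]
  · exact Or.inl ⟨(eq_range_of_no_descent h).trans (by rw [hS.2]), by rw [orbitElt, dif_neg h]⟩

namespace YTLRelations

section

variable (h : YTLRelations d n u g t)
include h

lemma hasWeight_orbitElt {e : A} (he : HasWeight n ζ t (twoValued a b (range k)) e)
    {S : Finset ℕ} (hS : S ∈ powersetCard k (range n)) :
    HasWeight n ζ t (twoValued a b S) (orbitElt g e S) := by
  induction hm : ∑ p ∈ S, p using Nat.strong_induction_on generalizing S with | _ m ih
  rcases exists_orbitElt_eq hS g e with ⟨rfl, h'⟩ | ⟨i, hi, hd, h'⟩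
  · rwa [h']
  · rw [h']
    have := h.hasWeight_smul
      (ih _ (hm ▸ sum_swapSet_lt hd) (swapSet_mem_powersetCard hi hS) rfl) hi
    rwa [← twoValued_swapSet, swapSet_swapSet] at this

lemma orbitElt_of_descent (e : A) {S : Finset ℕ} (hS : S ∈ powersetCard k (range n)) {i : ℕ}
    (hi : i + 1 < n) (hd : i ∉ S ∧ i + 1 ∈ S) :
    orbitElt g e S = g i * orbitElt g e (swapSet i S) := by
  induction hm : ∑ p ∈ S, p using Nat.strong_induction_on generalizing S i with | _ m ih
  rcases exists_orbitElt_eq hS g e with ⟨rfl, _⟩ | ⟨j, hj, hd', h'⟩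
  · simp only [mem_range] at hd
    omega
  rcases eq_or_ne i j with rfl | hij
  · exact h'
  have hij : i + 1 < j ∨ j + 1 < i := by
    by_contra hc
    rcases (show j = i + 1 ∨ i = j + 1 by omega) with rfl | rfl
    · exact hd'.1 hd.2
    · exact hd.1 hd'.2
  have e₁ : sw j i = i := sw_apply_of_ne (by omega) (by omega)
  have e₂ : sw j (i + 1) = i + 1 := sw_apply_of_ne (by omega) (by omega)
  have e₃ : sw i j = j := sw_apply_of_ne (by omega) (by omega)
  have e₄ : sw i (j + 1) = j + 1 := sw_apply_of_ne (by omega) (by omega)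
  have hc : g i * g j = g j * g i := by
    rcases hij with hij | hij
    · exact h.comm i j hij hj
    · exact (h.comm j i hij hi).symm
  rw [h', ih _ (hm ▸ sum_swapSet_lt hd') (swapSet_mem_powersetCard hj hS) hi
      (by simpa only [mem_swapSet, e₁, e₂] using hd) rfl,
    ih _ (hm ▸ sum_swapSet_lt hd) (swapSet_mem_powersetCard hi hS) hj
      (by simpa only [mem_swapSet, e₃, e₄] using hd') rfl, swapSet_comm hij, ← mul_assoc, ← mul_assoc,
    hc]

lemma g_mul_orbitElt (hζ : IsPrimitiveRoot ζ d) (hu : u ≠ 0) (hab : a ≠ b) (hk : 0 < k)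
    (hkn : k < n) {e : A} (he : HasWeight n ζ t (twoValued a b (range k)) e)
    {S : Finset ℕ} (hS : S ∈ powersetCard k (range n)) {i : ℕ} (hi : i + 1 < n) :
    g i * orbitElt g e S = orbitElt g e (swapSet i S) ∨ g i * orbitElt g e S = -orbitElt g e S := by
  have hS' := swapSet_mem_powersetCard hi hS
  by_cases h₁ : i ∈ S <;> by_cases h₂ : i + 1 ∈ S
  rotate_left
  · left
    rw [h.orbitElt_of_descent e hS' hi (by simpa [mem_swapSet] using ⟨h₂, h₁⟩), swapSet_swapSet]
  · left
    rw [h.orbitElt_of_descent e hS hi ⟨h₁, h₂⟩]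
    refine h.g_g_smul_of_ne hζ (h.hasWeight_orbitElt he hS') hi ?_
    simp [twoValued, mem_swapSet, h₁, h₂, hab]
  all_goals
    right
    have hw := h.hasWeight_orbitElt he hS
    have hp : ∃ p < n, twoValued a b S p ≠ twoValued a b S i := by
      rw [mem_powersetCard] at hS
      obtain ⟨p, hp⟩ : S.Nonempty := by rw [← card_pos]; omega
      obtain ⟨q, hq, hq'⟩ : ∃ q ∈ range n, q ∉ S := by
        by_contra hc
        push Not at hc
        have := card_le_card (show range n ⊆ S from hc)
        rw [card_range] at this
        omega
      by_cases hi : i ∈ S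
      · exact ⟨q, mem_range.1 hq, by simp [twoValued, hq', hi, hab.symm]⟩
      · exact ⟨p, mem_range.1 (hS.1 hp), by simp [twoValued, hp, hi, hab]⟩
    obtain ⟨p, hp, hne⟩ := hp
    have := h.add_g_mul_weightIdem hζ hu hi hp (by simp [twoValued, h₁, h₂]) hne
    have hE : weightIdem ζ t (twoValued a b S) n * orbitElt g e S = orbitElt g e S :=
      hw.weightIdem_smul hζ le_rfl fun _ _ => rfl
    rw [eq_neg_iff_add_eq_zero, add_comm, ← hE, ← mul_assoc, ← add_mul, this, zero_mul]

end

end YTLRelations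

/-- The generators `g i` and `t p` with indices in range. -/
def generators (n : ℕ) (g t : ℕ → A) : Set A := {x | (∃ i, i + 1 < n ∧ x = g i) ∨ ∃ p < n, x = t p}

lemma mul_mem_of_generators (hgen : Algebra.adjoin F (generators n g t) = ⊤) {N : Submodule F A}
    (hg : ∀ i, i + 1 < n → ∀ x ∈ N, g i * x ∈ N) (ht : ∀ p < n, ∀ x ∈ N, t p * x ∈ N) (x : A) :
    ∀ y ∈ N, x * y ∈ N := by
  have hx : x ∈ Algebra.adjoin F (generators n g t) := hgen ▸ Algebra.mem_top
  induction hx using Algebra.adjoin_induction with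
  | mem x hx =>
    rcases hx with ⟨i, hi, rfl⟩ | ⟨p, hp, rfl⟩
    · exact hg i hi
    · exact ht p hp
  | algebraMap r =>
    intro y hy
    rw [← Algebra.smul_def]
    exact N.smul_mem r hy
  | add x x' _ _ hx hx' =>
    intro y hy
    rw [add_mul]
    exact add_mem (hx y hy) (hx' y hy)
  | mul x x' _ _ hx hx' =>
    intro y hy
    rw [mul_assoc]
    exact hx _ (hx' y hy)

lemma leftIdeal_eq_span (hgen : Algebra.adjoin F (generators n g t) = ⊤) {ι : Type*} {f : ι → A}
    {e : A} (he : e ∈ Submodule.span F (Set.range f)) (hf : ∀ i, f i ∈ leftIdeal F e)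
    (hg : ∀ i, i + 1 < n → ∀ j, g i * f j ∈ Submodule.span F (Set.range f))
    (ht : ∀ p < n, ∀ j, t p * f j ∈ Submodule.span F (Set.range f)) :
    leftIdeal F e = Submodule.span F (Set.range f) := by
  have key : ∀ z : A, (∀ j, z * f j ∈ Submodule.span F (Set.range f)) →
      ∀ x ∈ Submodule.span F (Set.range f), z * x ∈ Submodule.span F (Set.range f) := by
    intro z hz x hx
    induction hx using Submodule.span_induction with
    | zero => simp
    | add x y _ _ hx hy => rw [mul_add]; exact add_mem hx hy
    | smul a x _ hx => rw [mul_smul_comm]; exact Submodule.smul_mem _ _ hx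
    | mem x hx => obtain ⟨j, rfl⟩ := hx; exact hz j
  apply le_antisymm
  · rintro _ ⟨y, rfl⟩
    exact mul_mem_of_generators hgen (fun i hi => key _ (hg i hi)) (fun p hp => key _ (ht p hp))
      y e he
  · exact Submodule.span_le.2 (Set.range_subset_iff.2 hf)

lemma YTLRelations.leftIdeal_twoValued (h : YTLRelations d n u g t)
    (hgen : Algebra.adjoin F (generators n g t) = ⊤) (hζ : IsPrimitiveRoot ζ d) (hu : u ≠ 0)
    (hab : a ≠ b) (hk : 0 < k) (hkn : k < n) :
    leftIdeal F (weightIdem ζ t (twoValued a b (range k)) n) =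
      Submodule.span F (Set.range fun S : powersetCard k (range n) =>
        orbitElt g (weightIdem ζ t (twoValued a b (range k)) n) S) := by
  have he := h.hasWeight_weightIdem hζ (twoValued a b (range k)) le_rfl
  generalize weightIdem ζ t (twoValued a b (range k)) n = e at *
  have hmem : ∀ S ∈ powersetCard k (range n), orbitElt g e S ∈ Submodule.span F
      (Set.range fun S : powersetCard k (range n) => orbitElt g e S) :=
    fun S hS => Submodule.subset_span ⟨⟨S, hS⟩, rfl⟩
  refine leftIdeal_eq_span hgen ?_ ?_ ?_ ?_
  · have hr : range k ∈ powersetCard k (range n) := by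
      simp [mem_powersetCard, hkn.le]
    simpa only [orbitElt_range] using hmem _ hr
  · rintro ⟨S, hS⟩
    induction hm : ∑ p ∈ S, p using Nat.strong_induction_on generalizing S with | _ m ih
    rcases exists_orbitElt_eq hS g e with ⟨_, h'⟩ | ⟨i, hi, hd, h'⟩
    · simp only [h']
      exact ⟨1, one_mul e⟩
    · obtain ⟨y, hy⟩ := ih _ (hm ▸ sum_swapSet_lt hd) _ (swapSet_mem_powersetCard hi hS) rfl
      refine ⟨g i * y, ?_⟩
      simp only [h', ← hy, LinearMap.mulRight_apply, mul_assoc]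
  · rintro i hi ⟨S, hS⟩
    rcases h.g_mul_orbitElt hζ hu hab hk hkn he hS hi with h' | h' <;> simp only [h']
    · exact hmem _ (swapSet_mem_powersetCard hi hS)
    · exact neg_mem (hmem S hS)
  · rintro p hp ⟨S, hS⟩
    have := h.hasWeight_orbitElt he hS p hp
    rw [smul_eq_mul] at this
    simp only [this]
    exact Submodule.smul_mem _ _ (hmem S hS)

end Orbit

lemma add_idem_triple {F A : Type*} [Field F] [Ring A] [Algebra F A] {u : F} {a b e : A}
    (he : e * e = e) (ha : e * a = a) (ha' : a * e = a) (hb : e * b = b) (hb' : b * e = b)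
    (hsq : a * a = u • e + (u - 1) • a) (htl : a * b * a + a * b + b * a + a + b + e = 0) :
    (a + e) * (b + e) * (a + e) = u • (a + e) := by
  have : (a + e) * (b + e) * (a + e) = (a * b * a + a * b + b * a + a + b + e) + (a * a + a) := by
    simp only [add_mul, mul_add, he, ha, ha', hb, hb', mul_assoc]
    abel
  rw [this, htl, hsq]
  module

section Constant

variable {F A : Type*} [Field F] [Ring A] [Algebra F A] {d n : ℕ} [NeZero d] [CharZero F]
  {ζ u : F} {g t : ℕ → A} {a : Fin d}

/-- The Temperley–Lieb generators, indexed from `1`, in the corner ring of an idempotent `e`. -/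
def cornerGen (g : ℕ → A) (e : A) (i : ℕ) : A := g (i - 1) * e + e

lemma cornerGen_succ (g : ℕ → A) (e : A) (i : ℕ) : cornerGen g e (i + 1) = g i * e + e := rfl

namespace YTLRelations

section

variable (h : YTLRelations d n u g t)
include h

lemma relations_cornerGen (hζ : IsPrimitiveRoot ζ d) (a : Fin d) :
    TemperleyLieb.Relations n u (cornerGen g (weightIdem ζ t (fun _ => a) n)) := by
  have hee := h.weightIdem_mul_self hζ fun _ => a
  have hl : ∀ i, i + 1 < n → weightIdem ζ t (fun _ => a) n * (g i * weightIdem ζ t (fun _ => a) n)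
      = g i * weightIdem ζ t (fun _ => a) n := fun i hi => h.weightIdem_mul_g_mul_of_eq hζ hi rfl
  have hq : ∀ i, i + 1 < n → g i * (g i * weightIdem ζ t (fun _ => a) n) =
      u • weightIdem ζ t (fun _ => a) n + (u - 1) • (g i * weightIdem ζ t (fun _ => a) n) :=
    fun i hi => h.g_g_smul_of_eq hζ (h.hasWeight_weightIdem hζ _ le_rfl) hi rfl
  generalize weightIdem ζ t (fun _ => a) n = e at *
  have hr : ∀ i, (g i * e) * e = g i * e := fun i => by rw [mul_assoc, hee]
  have hm : ∀ i j, j + 1 < n → (g i * e) * (g j * e) = g i * (g j * e) := fun i j hj => by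
    rw [mul_assoc, hl j hj]
  have hm₃ : ∀ i j k, j + 1 < n → k + 1 < n →
      (g i * e) * (g j * e) * (g k * e) = g i * (g j * (g k * e)) := fun i j k hj hk => by
    rw [hm i j hj, mul_assoc, mul_assoc, hl k hk]
  have hsq : ∀ i, i + 1 < n → (g i * e) * (g i * e) = u • e + (u - 1) • (g i * e) :=
    fun i hi => by rw [hm i i hi, hq i hi]
  have htl : ∀ i, i + 2 < n → (g i * e) * (g (i + 1) * e) * (g i * e) +
      (g i * e) * (g (i + 1) * e) + (g (i + 1) * e) * (g i * e) + g i * e + g (i + 1) * e + e = 0 := by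
    intro i hi
    have := congrArg (· * e) (h.tl i hi)
    simp only [add_mul, zero_mul, one_mul, mul_assoc] at this
    rw [hm₃ _ _ _ (by omega) (by omega), hm _ _ (by omega), hm _ _ (by omega), this]
  have hbr : ∀ i, i + 2 < n → (g (i + 1) * e) * (g i * e) * (g (i + 1) * e) =
      (g i * e) * (g (i + 1) * e) * (g i * e) := by
    intro i hi
    have := congrArg (· * e) (h.braid i hi)
    simp only [mul_assoc] at this
    rw [hm₃ _ _ _ (by omega) (by omega), hm₃ _ _ _ (by omega) (by omega), this]
  constructor
  · rintro (_ | i) h1 hi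
    · omega
    · rw [cornerGen_succ, add_mul, mul_add, mul_add, hsq i hi, hr, hl i hi, hee]
      module
  · rintro (_ | i) h1 hi
    · omega
    · exact add_idem_triple hee (hl i (by omega)) (hr i) (hl (i + 1) hi) (hr (i + 1))
        (hsq i (by omega)) (htl i hi)
  · rintro (_ | i) h1 hi
    · omega
    · refine add_idem_triple hee (hl (i + 1) hi) (hr (i + 1)) (hl i (by omega)) (hr i)
        (hsq (i + 1) (by omega)) ?_
      simp only [Nat.add_sub_cancel]
      rw [hbr i hi, ← htl i hi]
      abel
  · rintro (_ | i) (_ | j) h1 hij hj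
    any_goals omega
    have hc : g i * (g j * e) = g j * (g i * e) := by
      rw [← mul_assoc, h.comm i j (by omega) hj, mul_assoc]
    simp only [cornerGen_succ, add_mul, mul_add, hm i j hj, hm j i (by omega), hr, hee,
      hl i (by omega), hl j hj, hc]
    abel

lemma leftIdeal_const (hgen : Algebra.adjoin F (generators n g t) = ⊤) (hζ : IsPrimitiveRoot ζ d)
    (hn : 0 < n) (a : Fin d) :
    leftIdeal F (weightIdem ζ t (fun _ => a) n) =
      Submodule.span F (Set.range fun w : TemperleyLieb.allWords (n - 1) =>
        (w.1.map (cornerGen g (weightIdem ζ t (fun _ => a) n))).prod *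
          weightIdem ζ t (fun _ => a) n) := by
  have hrel := h.relations_cornerGen hζ a
  have hee := h.weightIdem_mul_self hζ fun _ => a
  have hw := h.hasWeight_weightIdem hζ (fun _ => a) le_rfl
  have hl : ∀ i, i + 1 < n → weightIdem ζ t (fun _ => a) n * (g i * weightIdem ζ t (fun _ => a) n)
      = g i * weightIdem ζ t (fun _ => a) n := fun i hi => h.weightIdem_mul_g_mul_of_eq hζ hi rfl
  generalize weightIdem ζ t (fun _ => a) n = e at *
  have hspan : ∀ x ∈ TemperleyLieb.wordSpan F (cornerGen g e) (n - 1), x * e ∈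
      Submodule.span F (Set.range fun w : TemperleyLieb.allWords (n - 1) =>
        (w.1.map (cornerGen g e)).prod * e) := by
    intro x hx
    induction hx using Submodule.span_induction with
    | zero => simp
    | add x y _ _ hx hy => rw [add_mul]; exact add_mem hx hy
    | smul c x _ hx => rw [smul_mul_assoc]; exact Submodule.smul_mem _ _ hx
    | mem x hx =>
      obtain ⟨j, w, hw, rfl⟩ := hx
      exact Submodule.subset_span ⟨⟨w, TemperleyLieb.mem_allWords.2 ⟨j, hw⟩⟩, rfl⟩
  have hmem : ∀ w : TemperleyLieb.allWords (n - 1), (w.1.map (cornerGen g e)).prod ∈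
      TemperleyLieb.wordSpan F (cornerGen g e) (n - 1) := by
    rintro ⟨w, hw⟩
    obtain ⟨j, hj⟩ := TemperleyLieb.mem_allWords.1 hw
    exact Submodule.subset_span ⟨j, w, hj, rfl⟩
  have hfix : ∀ w : TemperleyLieb.allWords (n - 1),
      e * ((w.1.map (cornerGen g e)).prod * e) = (w.1.map (cornerGen g e)).prod * e := by
    rintro ⟨w, hw⟩
    obtain ⟨j, hj⟩ := TemperleyLieb.mem_allWords.1 hw
    have hlet := TemperleyLieb.letters_of_mem_normalWords hj
    rcases w with _ | ⟨i, w⟩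
    · simpa using hee
    · obtain ⟨h1, h2⟩ := hlet i (by simp)
      obtain ⟨i, rfl⟩ : ∃ k, i = k + 1 := ⟨i - 1, by omega⟩
      simp only [List.map_cons, List.prod_cons, ← mul_assoc]
      rw [cornerGen_succ, mul_add, hl i (by omega), hee]
  refine leftIdeal_eq_span hgen ?_ (fun w => mul_mem_leftIdeal _ _) ?_ ?_
  · simpa using hspan 1 (TemperleyLieb.one_mem_wordSpan _)
  · intro i hi w
    have : g i * ((w.1.map (cornerGen g e)).prod * e) =
        cornerGen g e (i + 1) * (w.1.map (cornerGen g e)).prod * e -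
          (w.1.map (cornerGen g e)).prod * e := by
      rw [cornerGen_succ, mul_assoc, add_mul, mul_assoc, hfix, add_sub_cancel_right]
    rw [this]
    exact sub_mem (hspan _ (TemperleyLieb.mul_mem_wordSpan hrel (n - 1) (by omega) (i + 1)
      (by omega) (by omega) _ (hmem w))) (hspan _ (hmem w))
  · intro p hp w
    have : t p * ((w.1.map (cornerGen g e)).prod * e) =
        ζ ^ (a : ℕ) • ((w.1.map (cornerGen g e)).prod * e) := by
      have hte : t p * e = ζ ^ (a : ℕ) • e := hw p hp
      rw [← hfix w, ← mul_assoc, hte, smul_mul_assoc]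
    rw [this]
    exact Submodule.smul_mem _ _ (hspan _ (hmem w))

end

end YTLRelations

end Constant

section Transfer

variable {F A B : Type*} [Field F] [Ring A] [Algebra F A] [Ring B] [Algebra F B] {d n : ℕ}

lemma map_weightIdem (φ : A →ₐ[F] B) {ζ : F} {t : ℕ → A} {t' : ℕ → B} (χ : ℕ → Fin d) {m : ℕ}
    (h : ∀ p < m, φ (t p) = t' p) : φ (weightIdem ζ t χ m) = weightIdem ζ t' χ m := by
  induction m with
  | zero => exact map_one φ
  | succ m ih =>
    simp only [weightIdem, map_mul, eigenIdem, map_smul, map_sum, map_pow, h m (by omega),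
      ih fun p hp => h p (by omega)]

end Transfer

section ConstantRep

variable {F A B : Type*} [Field F] [Ring A] [Algebra F A] [Ring B] [Algebra F B] {d n : ℕ}
  [NeZero d] [CharZero F] {ζ u : F} {g t : ℕ → A} {V : ℕ → B} {a : Fin d}

/-- A representation of the Temperley–Lieb algebra gives one of the Yokonuma–Temperley–Lieb
algebra in which every `t p` is the same scalar. -/
lemma _root_.TemperleyLieb.Relations.ytlRelations (h : TemperleyLieb.Relations n u V)
    (hζ : IsPrimitiveRoot ζ d) (a : Fin d) :
    YTLRelations d n u (fun i => V (i + 1) - 1) (fun _ => ζ ^ (a : ℕ) • 1) := by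
  have he : ∀ i, eElt F d (fun _ => ζ ^ (a : ℕ) • (1 : B)) i = 1 := fun i => by
    simpa using eElt_smul (t := fun _ => ζ ^ (a : ℕ) • (1 : B)) (i := i) (a := a) (b := a)
      (y := (1 : B)) hζ (by simp) (by simp)
  refine ⟨fun i j hij hj => ?_, fun i hi => ?_, fun _ _ _ _ => rfl, fun _ _ _ _ => ?_,
    fun _ _ => ?_, fun i hi => ?_, fun i hi => ?_⟩
  · simp only [sub_mul, mul_sub, h.comm (i + 1) (j + 1) (by omega) (by omega) (by omega),
      one_mul, mul_one]
    abel
  · simp only [sub_mul, mul_sub, h.up (i + 1) (by omega) (by omega),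
      h.down (i + 1) (by omega) (by omega), h.sq (i + 1) (by omega) (by omega),
      h.sq (i + 1 + 1) (by omega) (by omega), one_mul, mul_one]
    module
  · simp
  · rw [smul_pow, one_pow, pow_right_comm, hζ.pow_eq_one, one_pow, one_smul]
  · simp only [he, sub_mul, mul_sub, h.sq (i + 1) (by omega) (by omega), one_mul, mul_one]
    module
  · simp only [sub_mul, mul_sub, h.up (i + 1) (by omega) (by omega),
      h.sq (i + 1) (by omega) (by omega), one_mul, mul_one]
    module

lemma linearIndependent_of_constantRep (hζ : IsPrimitiveRoot ζ d) (φ : A →ₐ[F] B)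
    (hg : ∀ i, i + 1 < n → φ (g i) = V (i + 1) - 1) (ht : ∀ p < n, φ (t p) = ζ ^ (a : ℕ) • 1)
    (hV : LinearIndependent F fun w : TemperleyLieb.allWords (n - 1) => (w.1.map V).prod) :
    LinearIndependent F fun w : TemperleyLieb.allWords (n - 1) =>
      (w.1.map (cornerGen g (weightIdem ζ t (fun _ => a) n))).prod *
        weightIdem ζ t (fun _ => a) n := by
  have he : φ (weightIdem ζ t (fun _ => a) n) = 1 := by
    have hw : HasWeight n ζ (fun _ => ζ ^ (a : ℕ) • (1 : B)) (fun _ => a) (1 : B) := fun p _ => by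
      simp
    rw [map_weightIdem φ _ ht]
    simpa using hw.weightIdem_smul hζ le_rfl (χ' := fun _ => a) fun _ _ => rfl
  refine LinearIndependent.of_comp φ.toLinearMap ?_
  convert hV using 1
  funext w
  obtain ⟨j, hj⟩ := TemperleyLieb.mem_allWords.1 w.2
  simp only [Function.comp_apply, AlgHom.toLinearMap_apply, map_mul, he, mul_one, map_list_prod,
    List.map_map]
  congr 1
  refine List.map_congr_left fun i hi => ?_
  obtain ⟨h1, h2⟩ := TemperleyLieb.letters_of_mem_normalWords hj i hi
  obtain ⟨i, rfl⟩ : ∃ k, i = k + 1 := ⟨i - 1, by omega⟩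
  simp [cornerGen_succ, he, hg i (by omega)]

end ConstantRep

section TwoValuedRep

variable {F A : Type*} [Field F] [Ring A] [Algebra F A] {d n k : ℕ} {ζ u : F} {g t : ℕ → A}
  {a b : Fin d}

variable (F) in
/-- The operator `g i` on the free module on sets, acting by minus the transposition. -/
noncomputable def setG (i : ℕ) : Module.End F (Finset ℕ →₀ F) :=
  Finsupp.linearCombination F fun S => -Finsupp.single (swapSet i S) 1

/-- The diagonal operator `t p` on the free module on sets. -/
noncomputable def setT (ζ : F) (a b : Fin d) (p : ℕ) : Module.End F (Finset ℕ →₀ F) :=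
  Finsupp.linearCombination F fun S => ζ ^ (twoValued a b S p : ℕ) • Finsupp.single S 1

lemma setG_single (i : ℕ) (S : Finset ℕ) :
    setG F i (Finsupp.single S 1) = -Finsupp.single (swapSet i S) 1 := by
  simp [setG]

lemma setT_single (ζ : F) (a b : Fin d) (p : ℕ) (S : Finset ℕ) :
    setT ζ a b p (Finsupp.single S 1) = ζ ^ (twoValued a b S p : ℕ) • Finsupp.single S 1 := by
  rw [setT, Finsupp.linearCombination_single, one_smul]

lemma hasWeight_single (ζ : F) (a b : Fin d) (S : Finset ℕ) :
    HasWeight n ζ (setT ζ a b) (twoValued a b S) (Finsupp.single S (1 : F)) :=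
  fun p _ => setT_single ζ a b p S

lemma end_ext {f f' : Module.End F (Finset ℕ →₀ F)}
    (h : ∀ S, f (Finsupp.single S 1) = f' (Finsupp.single S 1)) : f = f' :=
  Finsupp.lhom_ext' fun S => LinearMap.ext_ring (h S)

lemma swapSet_braid (i : ℕ) (S : Finset ℕ) :
    swapSet i (swapSet (i + 1) (swapSet i S)) = swapSet (i + 1) (swapSet i (swapSet (i + 1) S)) := by
  ext p
  simp only [mem_swapSet, Equiv.swap_apply_def]
  congr! 1
  split_ifs <;> omega

lemma swapSet_conj_eq_self {i : ℕ} {S : Finset ℕ} (h : i ∈ S ↔ i + 2 ∈ S) :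
    swapSet i (swapSet (i + 1) (swapSet i S)) = S := by
  ext p
  simp only [mem_swapSet]
  have h₁ : sw i (sw (i + 1) (sw i p)) = Equiv.swap i (i + 2) p := by
    simp only [Equiv.swap_apply_def]
    split_ifs <;> omega
  rw [h₁, Equiv.swap_apply_def]
  split_ifs with h₂ h₃
  · rw [h₂, h]
  · rw [h₃, h]
  · rfl

variable [NeZero d] [CharZero F]

lemma ytlRelations_set (hζ : IsPrimitiveRoot ζ d) (hab : a ≠ b) :
    YTLRelations d n u (setG F) (setT ζ a b) := by
  refine ⟨fun i j hij _ => end_ext fun S => ?_, fun i hi => end_ext fun S => ?_,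
    fun p q _ _ => end_ext fun S => ?_, fun i p _ _ => end_ext fun S => ?_,
    fun p _ => end_ext fun S => ?_, fun i hi => end_ext fun S => ?_,
    fun i hi => end_ext fun S => ?_⟩
  · simp only [Module.End.mul_apply, setG_single, map_neg, swapSet_comm (Or.inl hij) S]
  · simp only [Module.End.mul_apply, setG_single, map_neg, swapSet_braid]
  · simp only [Module.End.mul_apply, setT_single, map_smul, smul_smul, mul_comm]
  · simp only [Module.End.mul_apply, setT_single, setG_single, map_smul, map_neg, smul_neg,
      twoValued_swapSet, Function.comp_apply]
  · have := pow_smul_of_smul_eq (hasWeight_single (n := p + 1) ζ a b S p (by omega)) d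
    rw [pow_right_comm, hζ.pow_eq_one, one_pow, one_smul] at this
    exact this
  · have w := hasWeight_single (n := i + 2) ζ a b S
    have w' := hasWeight_single (n := i + 2) ζ a b (swapSet i S)
    have e := eElt_smul hζ (w i (by omega)) (w (i + 1) (by omega))
    have e' := eElt_smul hζ (w' i (by omega)) (w' (i + 1) (by omega))
    simp only [Module.End.smul_def] at e e'
    simp only [Module.End.mul_apply, LinearMap.add_apply, LinearMap.smul_apply, setG_single,
      map_neg, neg_neg, swapSet_swapSet, Module.End.one_apply, e, e']
    by_cases hi' : i ∈ S ↔ i + 1 ∈ S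
    · rw [swapSet_eq_self hi', if_pos (by simp [twoValued, hi'])]
      module
    · have : twoValued a b S i ≠ twoValued a b S (i + 1) := by
        unfold twoValued
        split_ifs <;> simp_all [eq_comm]
      rw [if_neg this, if_neg (by simpa [twoValued_swapSet] using this.symm)]
      module
  · simp only [Module.End.mul_apply, LinearMap.add_apply, setG_single, map_neg, neg_neg,
      Module.End.one_apply, LinearMap.zero_apply]
    by_cases h₁ : i ∈ S ↔ i + 1 ∈ S
    · rw [swapSet_eq_self h₁]
      abel
    by_cases h₂ : i + 1 ∈ S ↔ i + 1 + 1 ∈ S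
    · rw [swapSet_braid, swapSet_eq_self h₂]
      abel
    have h₃ : i ∈ S ↔ i + 2 ∈ S := by
      rw [show i + 1 + 1 = i + 2 from rfl] at h₂
      tauto
    have h₄ := swapSet_conj_eq_self h₃
    have h₅ : swapSet (i + 1) (swapSet i S) = swapSet i S := by
      conv_rhs => rw [← h₄, swapSet_swapSet]
    have h₆ : swapSet i (swapSet (i + 1) S) = swapSet (i + 1) S := by
      conv_rhs => rw [← h₄, swapSet_braid, swapSet_swapSet]
    rw [h₄, h₅, h₆]
    abel

lemma linearIndependent_of_setRep (hζ : IsPrimitiveRoot ζ d)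
    (φ : A →ₐ[F] Module.End F (Finset ℕ →₀ F)) (hg : ∀ i, i + 1 < n → φ (g i) = setG F i)
    (ht : ∀ p < n, φ (t p) = setT ζ a b p) :
    LinearIndependent F fun S : powersetCard k (range n) =>
      orbitElt g (weightIdem ζ t (twoValued a b (range k)) n) S := by
  have he : φ (weightIdem ζ t (twoValued a b (range k)) n) (Finsupp.single (range k) 1) =
      Finsupp.single (range k) 1 := by
    have hφ := map_weightIdem (B := Module.End F (Finset ℕ →₀ F)) (ζ := ζ) φ
      (twoValued a b (range k)) ht
    rw [hφ]
    exact (hasWeight_single (n := n) ζ a b (range k)).weightIdem_smul hζ le_rfl fun _ _ => rfl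
  generalize weightIdem ζ t (twoValued a b (range k)) n = e at *
  have key : ∀ S : powersetCard k (range n), ∃ c : Fˣ,
      φ (orbitElt g e S) (Finsupp.single (range k) 1) = c • Finsupp.single S.1 (1 : F) := by
    rintro ⟨S, hS⟩
    induction hm : ∑ p ∈ S, p using Nat.strong_induction_on generalizing S with | _ m ih
    rcases exists_orbitElt_eq hS g e with ⟨h, h'⟩ | ⟨i, hi, hd, h'⟩
    · exact ⟨1, by dsimp only; rw [h', he, h, one_smul]⟩
    · obtain ⟨c, hc⟩ := ih _ (hm ▸ sum_swapSet_lt hd) _ (swapSet_mem_powersetCard hi hS) rfl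
      refine ⟨-c, ?_⟩
      dsimp only at hc ⊢
      rw [h', map_mul, Module.End.mul_apply, hc, hg i hi, Units.smul_def, map_smul, setG_single,
        swapSet_swapSet, Units.smul_def, Units.val_neg, neg_smul, smul_neg]
  choose c hc using key
  refine LinearIndependent.of_comp
    ((LinearMap.applyₗ (Finsupp.single (range k) (1 : F))).comp φ.toLinearMap) ?_
  have hli : LinearIndependent F fun S : powersetCard k (range n) =>
      (Finsupp.single S.1 1 : Finset ℕ →₀ F) :=
    (Finsupp.linearIndependent_single_one F (Finset ℕ)).comp _ Subtype.val_injective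
  convert hli.units_smul c using 1
  funext S
  exact hc S

end TwoValuedRep

section Presentation

lemma swapIdx_succ (i p : ℕ) : swapIdx (i + 1) (p + 1) = sw i p + 1 := by
  simp only [swapIdx, Equiv.swap_apply_def]
  split_ifs <;> omega

lemma ytlRelations (d n : ℕ) :
    YTLRelations d n uu (fun i => zg d n (i + 1)) (fun p => zt d n (p + 1)) := by
  have base {a b : FA} (h : YRel d n a b) :
      RingQuot.mkAlgHom K (YTLRel d n) a = RingQuot.mkAlgHom K (YTLRel d n) b :=
    RingQuot.mkAlgHom_rel K (.base h)
  refine ⟨fun i j hij hj => ?_, fun i hi => ?_, fun p q hp hq => ?_, fun i p hi hp => ?_,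
    fun p hp => ?_, fun i hi => ?_, fun i hi => ?_⟩
  · simpa only [zg, zt, map_mul] using base (.commute (i + 1) (j + 1) (by omega) (by omega) (by omega)
      (by omega) (by omega))
  · simpa only [zg, zt, map_mul] using base (.braid (i + 1) (by omega) (by omega))
  · simpa only [zg, zt, map_mul] using base (.tcomm (p + 1) (q + 1) (by omega) (by omega) (by omega)
      (by omega))
  · simpa only [zg, zt, map_mul, swapIdx_succ] using base (.tg (i + 1) (p + 1) (by omega) (by omega)
      (by omega) (by omega))
  · simpa only [zg, zt, map_pow, map_one] using base (.torder (p + 1) (by omega) (by omega))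
  · simpa only [zg, zt, map_pow, map_add, map_one, map_smul, map_mul, ef, eElt, map_sum, sq]
      using base (.quad (i + 1) (by omega) (by omega))
  · simpa only [zg, zt, map_add, map_mul, map_one, map_zero] using
      RingQuot.mkAlgHom_rel K (YTLRel.tl (d := d) (n := n) (i + 1) (by omega) (by omega))

lemma adjoin_generators (d n : ℕ) :
    Algebra.adjoin K (generators n (fun i => zg d n (i + 1)) (fun p => zt d n (p + 1))) = ⊤ := by
  rw [eq_top_iff]
  rintro x -
  obtain ⟨x, rfl⟩ := RingQuot.mkAlgHom_surjective K (YTLRel d n) x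
  have base {a b : FA} (h : YRel d n a b) :
      RingQuot.mkAlgHom K (YTLRel d n) a = RingQuot.mkAlgHom K (YTLRel d n) b :=
    RingQuot.mkAlgHom_rel K (.base h)
  induction x using FreeAlgebra.induction with
  | grade0 r =>
    rw [AlgHom.commutes]
    exact Subalgebra.algebraMap_mem _ r
  | grade1 x =>
    rcases x with i | p
    · change RingQuot.mkAlgHom K (YTLRel d n) (Gf i) ∈ _
      rcases Nat.lt_or_ge i n with hi | hi
      · rcases i with _ | i
        · rw [base (.gjunk 0 (by omega)), map_zero]
          exact zero_mem _
        · exact Algebra.subset_adjoin (Or.inl ⟨i, hi, rfl⟩)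
      · rw [base (.gjunk i (by omega)), map_zero]
        exact zero_mem _
    · change RingQuot.mkAlgHom K (YTLRel d n) (Tf p) ∈ _
      rcases Nat.lt_or_ge n p with hp | hp
      · rw [base (.tjunk p (by omega)), map_zero]
        exact zero_mem _
      · rcases p with _ | p
        · rw [base (.tjunk 0 (by omega)), map_zero]
          exact zero_mem _
        · exact Algebra.subset_adjoin (Or.inr ⟨p, hp, rfl⟩)
  | mul a b ha hb => rw [map_mul]; exact mul_mem ha hb
  | add a b ha hb => rw [map_add]; exact add_mem ha hb

variable {B : Type*} [Ring B] [Algebra K B] {d n : ℕ} {g t : ℕ → B}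

lemma YTLRelations.exists_algHom (h : YTLRelations d n uu g t) : ∃ φ : YTL d n →ₐ[K] B,
    (∀ i, i + 1 < n → φ (zg d n (i + 1)) = g i) ∧ ∀ p < n, φ (zt d n (p + 1)) = t p := by
  let f : FA →ₐ[K] B := FreeAlgebra.lift K (Sum.elim
    (fun i => if 1 ≤ i ∧ i < n then g (i - 1) else 0)
    (fun p => if 1 ≤ p ∧ p ≤ n then t (p - 1) else 0))
  have fG : ∀ i, i + 1 < n → f (Gf (i + 1)) = g i := fun i hi => by
    simp [f, Gf, hi]
  have fT : ∀ p, p < n → f (Tf (p + 1)) = t p := fun p hp => by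
    simp [f, Tf, Nat.succ_le_of_lt hp]
  have fE : ∀ i, i + 1 < n → f (ef d (i + 1)) = eElt K d t i := fun i hi => by
    simp only [ef, eElt, map_smul, map_sum, map_mul, map_pow, fT i (by omega), fT (i + 1) hi]
  have hY : ∀ ⦃a b⦄, YRel d n a b → f a = f b := by
    rintro _ _ (⟨i, j, hi, hin, hj, hjn, hij⟩ | ⟨i, hi, hin⟩ | ⟨i, j, hi, hin, hj, hjn⟩ |
      ⟨i, j, hi, hin, hj, hjn⟩ | ⟨j, hj, hjn⟩ | ⟨i, hi, hin⟩ | ⟨i, hi⟩ | ⟨j, hj⟩)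
    · obtain ⟨i, rfl⟩ := Nat.exists_eq_add_of_le' hi
      obtain ⟨j, rfl⟩ := Nat.exists_eq_add_of_le' hj
      rw [map_mul, map_mul, fG i hin, fG j hjn]
      rcases hij with hij | hij
      · exact h.comm i j (by omega) hjn
      · exact (h.comm j i (by omega) hin).symm
    · obtain ⟨i, rfl⟩ := Nat.exists_eq_add_of_le' hi
      simpa only [map_mul, fG i (by omega), fG (i + 1) (by omega)] using h.braid i (by omega)
    · obtain ⟨i, rfl⟩ := Nat.exists_eq_add_of_le' hi
      obtain ⟨j, rfl⟩ := Nat.exists_eq_add_of_le' hj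
      simpa only [map_mul, fT i hin, fT j hjn] using h.tcomm i j hin hjn
    · obtain ⟨i, rfl⟩ := Nat.exists_eq_add_of_le' hi
      obtain ⟨j, rfl⟩ := Nat.exists_eq_add_of_le' hj
      rw [map_mul, map_mul, swapIdx_succ, fG i hin, fT j hjn, fT _ (sw_lt hin hjn)]
      exact h.tg i j hin hjn
    · obtain ⟨j, rfl⟩ := Nat.exists_eq_add_of_le' hj
      simpa only [map_pow, map_one, fT j hjn] using h.tpow j hjn
    · obtain ⟨i, rfl⟩ := Nat.exists_eq_add_of_le' hi
      simpa only [map_pow, map_add, map_one, map_smul, map_mul, fE i hin, fG i hin, sq] using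
        h.quad i hin
    · simp only [f, Gf, FreeAlgebra.lift_ι_apply, Sum.elim_inl, map_zero]
      exact if_neg (by omega)
    · simp only [f, Tf, FreeAlgebra.lift_ι_apply, Sum.elim_inr, map_zero]
      exact if_neg (by omega)
  have hf : ∀ ⦃a b⦄, YTLRel d n a b → f a = f b := by
    rintro _ _ (hab | ⟨i, hi, hin⟩)
    · exact hY hab
    · obtain ⟨i, rfl⟩ := Nat.exists_eq_add_of_le' hi
      simpa only [map_add, map_mul, map_one, map_zero, fG i (by omega), fG (i + 1) (by omega)]
        using h.tl i (by omega)
  refine ⟨RingQuot.liftAlgHom K ⟨f, hf⟩, fun i hi => ?_, fun p hp => ?_⟩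
  · rw [zg, RingQuot.liftAlgHom_mkAlgHom_apply, fG i hi]
  · rw [zt, RingQuot.liftAlgHom_mkAlgHom_apply, fT p hp]

end Presentation

section Dimension

variable {d n : ℕ} [NeZero d] {ζ : K}

/-- The dimension of the left ideal generated by the idempotent of weight `χ`. -/
noncomputable def weightDim (n : ℕ) (ζ : K) (χ : ℕ → Fin d) : ℕ :=
  Module.finrank K (leftIdeal K (weightIdem ζ (fun p => zt d n (p + 1)) χ n))

lemma weightDim_congr {χ χ' : ℕ → Fin d} (h : ∀ p < n, χ p = χ' p) :
    weightDim n ζ χ = weightDim n ζ χ' := by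
  rw [weightDim, weightIdem_congr h, weightDim]

lemma uu_ne_zero : uu ≠ 0 := RatFunc.X_ne_zero

lemma uu_add_one_ne_zero : uu + 1 ≠ 0 := by
  have h : uu + 1 = algebraMap (Polynomial ℂ) K (Polynomial.X + Polynomial.C 1) := by
    rw [map_add, RatFunc.algebraMap_X, RatFunc.algebraMap_C, map_one, uu]
  rw [h]
  exact RatFunc.algebraMap_ne_zero (Polynomial.X_add_C_ne_zero 1)

lemma exists_field_sqrt (u : K) :
    ∃ (L : Type) (_ : Field L) (_ : Algebra K L) (s : L), s * s = algebraMap K L u := by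
  obtain ⟨s, hs⟩ := IsAlgClosed.exists_pow_nat_eq
    (algebraMap K (AlgebraicClosure K) u) (n := 2) two_pos
  exact ⟨AlgebraicClosure K, inferInstance, inferInstance, s, (sq s).symm.trans hs⟩

lemma weightDim_const (hn : 0 < n) (hζ : IsPrimitiveRoot ζ d) (a : Fin d) :
    weightDim n ζ (fun _ => a) = catalan n := by
  obtain ⟨L, _, _, s, hs⟩ := exists_field_sqrt uu
  have hu : algebraMap K L uu ≠ 0 := (map_ne_zero _).2 uu_ne_zero
  have hu₁ : algebraMap K L uu + 1 ≠ 0 := by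
    rw [← map_one (algebraMap K L), ← map_add]
    exact (map_ne_zero _).2 uu_add_one_ne_zero
  have hs₀ : s ≠ 0 := by
    rintro rfl
    exact hu (by rw [← hs, mul_zero])
  obtain ⟨φ, hg, ht⟩ :=
    ((TemperleyLieb.relations_matchingRep n uu hs).ytlRelations hζ a).exists_algHom
  have hV := TemperleyLieb.linearIndependent_prod_matchingRep K hu₁ hs₀ (n - 1)
  generalize TemperleyLieb.matchingRep (algebraMap K L uu) s = V at *
  have hli := linearIndependent_of_constantRep (g := fun i => zg d n (i + 1))
    (t := fun p => zt d n (p + 1)) (V := V) hζ φ hg ht hV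
  rw [weightDim, (ytlRelations d n).leftIdeal_const (adjoin_generators d n) hζ hn a,
    finrank_span_eq_card hli, Fintype.card_coe, TemperleyLieb.card_allWords, Nat.sub_add_cancel hn]

lemma weightDim_twoValued (hζ : IsPrimitiveRoot ζ d) {a b : Fin d} (hab : a ≠ b) {S : Finset ℕ}
    (hS : S ⊆ range n) (h₀ : 0 < S.card) (h₁ : S.card < n) :
    weightDim n ζ (twoValued a b S) = n.choose S.card := by
  induction hm : ∑ p ∈ S, p using Nat.strong_induction_on generalizing S with | _ m ih
  by_cases h : ∃ i, i ∉ S ∧ i + 1 ∈ S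
  · obtain ⟨i, hi⟩ := h
    have hin : i + 1 < n := mem_range.1 (hS hi.2)
    have hne : twoValued a b S i ≠ twoValued a b S (i + 1) := by
      simpa [twoValued, hi] using hab.symm
    obtain ⟨e⟩ := (ytlRelations d n).nonempty_leftIdeal_equiv hζ hin hne
    rw [weightDim, e.finrank_eq, ← twoValued_swapSet, ← weightDim,
      ih _ (hm ▸ sum_swapSet_lt hi) (swapSet_subset_range hin hS) (by rwa [card_swapSet])
      (by rwa [card_swapSet]) rfl, card_swapSet]
  · obtain ⟨k, hk⟩ : ∃ k, k = S.card := ⟨_, rfl⟩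
    have hr := eq_range_of_no_descent h
    rw [← hk] at hr h₀ h₁ ⊢
    subst hr
    obtain ⟨φ, hg, ht⟩ := (ytlRelations_set (n := n) (u := uu) hζ hab).exists_algHom
    have hli := linearIndependent_of_setRep (k := k) hζ φ hg ht
    rw [weightDim, (ytlRelations d n).leftIdeal_twoValued (adjoin_generators d n) hζ uu_ne_zero hab
      h₀ h₁, finrank_span_eq_card hli, Fintype.card_coe, card_powersetCard, card_range]

end Dimension

section Count

variable {d n : ℕ}

/-- A function on `Fin n` taking exactly two values, or one if `S` is trivial. -/
def twoValuedFin (a b : Fin d) (S : Finset (Fin n)) (p : Fin n) : Fin d := if p ∈ S then a else b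

/-- The parameters of weights with exactly two values. -/
def twoValuedIndex (d n : ℕ) : Finset ((Fin d × Fin d) × Finset (Fin n)) :=
  univ.filter (fun x => x.1 < x.2) ×ˢ ((univ.erase ∅).erase univ)

lemma mem_twoValuedIndex {x : (Fin d × Fin d) × Finset (Fin n)} :
    x ∈ twoValuedIndex d n ↔ x.1.1 < x.1.2 ∧ (∃ p, p ∈ x.2) ∧ ∃ q, q ∉ x.2 := by
  simp only [twoValuedIndex, mem_product, mem_filter, mem_univ, true_and, mem_erase, Ne,
    eq_univ_iff_forall, not_forall, ← nonempty_iff_ne_empty, Finset.Nonempty, and_comm]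

/-- The parameters of all weights with at most two values. -/
def weightIndex (d n : ℕ) : Finset (Fin d ⊕ ((Fin d × Fin d) × Finset (Fin n))) :=
  univ.disjSum (twoValuedIndex d n)

/-- The weight with a given parameter: a constant, or a function with exactly two values. -/
def weightOf : Fin d ⊕ ((Fin d × Fin d) × Finset (Fin n)) → Fin n → Fin d
  | .inl a => fun _ => a
  | .inr x => twoValuedFin x.1.1 x.1.2 x.2

lemma weightOf_injOn (hn : 0 < n) : Set.InjOn (weightOf (d := d) (n := n)) (weightIndex d n : Set _) := by
  have hne : ∀ (a : Fin d) (x : (Fin d × Fin d) × Finset (Fin n)), x ∈ twoValuedIndex d n →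
      weightOf (.inl a) ≠ weightOf (.inr x) := by
    intro a x hx e
    obtain ⟨h, ⟨p, hp⟩, q, hq⟩ := mem_twoValuedIndex.1 hx
    have hp' := congrFun e p
    have hq' := congrFun e q
    simp only [weightOf, twoValuedFin, if_pos hp, if_neg hq] at hp' hq'
    exact h.ne (hp'.symm.trans hq')
  rintro (a | x) hx (b | y) hy e
  · rw [show a = b from congrFun e ⟨0, hn⟩]
  · exact (hne a y (by simpa [weightIndex] using hy) e).elim
  · exact (hne b x (by simpa [weightIndex] using hx) e.symm).elim
  · obtain ⟨h, ⟨p, hp⟩, q, hq⟩ := mem_twoValuedIndex.1 (by simpa [weightIndex] using hx)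
    obtain ⟨h', ⟨p', hp'⟩, q', hq'⟩ := mem_twoValuedIndex.1 (by simpa [weightIndex] using hy)
    obtain ⟨⟨a, b⟩, S⟩ := x
    obtain ⟨⟨a', b'⟩, S'⟩ := y
    have e' : ∀ r, (if r ∈ S then a else b) = if r ∈ S' then a' else b' := congrFun e
    dsimp only at *
    have ep := e' p
    have eq := e' q
    have ep' := e' p'
    have eq' := e' q'
    rw [if_pos hp] at ep
    rw [if_neg hq] at eq
    rw [if_pos hp'] at ep'
    rw [if_neg hq'] at eq'
    obtain ⟨rfl, rfl⟩ : a = a' ∧ b = b' := by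
      split_ifs at ep eq ep' eq' <;> omega
    have : S = S' := by
      ext r
      grind
    rw [this]

lemma exists_three_values (hn : 0 < n) {χ : Fin n → Fin d}
    (h : χ ∉ weightOf '' (weightIndex d n : Set _)) :
    ∃ p q r, χ p ≠ χ q ∧ χ q ≠ χ r ∧ χ p ≠ χ r := by
  by_contra! hc
  have hconst : ∃ q, χ ⟨0, hn⟩ ≠ χ q := by
    by_contra! h'
    exact h ⟨.inl (χ ⟨0, hn⟩), by simp [weightIndex], funext h'⟩
  obtain ⟨q, hq⟩ := hconst
  obtain ⟨p, q, hlt⟩ : ∃ p q, χ p < χ q := by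
    rcases lt_or_gt_of_ne hq with h' | h'
    exacts [⟨_, _, h'⟩, ⟨_, _, h'⟩]
  refine h ⟨.inr ((χ p, χ q), univ.filter fun r => χ r = χ p), ?_, ?_⟩
  · rw [mem_coe, weightIndex, inr_mem_disjSum]
    exact mem_twoValuedIndex.2 ⟨hlt, ⟨p, by simp⟩, q, by simpa [weightIndex] using hlt.ne'⟩
  · funext r
    simp only [weightOf, twoValuedFin, mem_filter, mem_univ, true_and]
    split_ifs with hr
    · exact hr.symm
    · by_contra hr'
      exact hr (hc p q r hlt.ne hr').symm

lemma sum_choose_card (hn : 0 < n) :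
    ∑ S ∈ ((univ : Finset (Finset (Fin n))).erase ∅).erase univ, n.choose S.card + 2 =
      n.centralBinom := by
  have h := sum_powerset_apply_card (fun k => n.choose k) (x := (univ : Finset (Fin n)))
  have hne : (univ : Finset (Fin n)) ∈ (univ : Finset (Finset (Fin n))).erase ∅ := by
    have : NeZero n := ⟨hn.ne'⟩
    simp [univ_nonempty.ne_empty]
  rw [powerset_univ, card_univ, Fintype.card_fin, ← add_sum_erase _ _ (mem_univ ∅),
    ← add_sum_erase _ _ hne] at h
  simp only [card_empty, Nat.choose_zero_right, card_univ, Fintype.card_fin, Nat.choose_self,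
    smul_eq_mul, ← sq] at h
  rw [Nat.sum_range_choose_sq, ← Nat.centralBinom] at h
  omega

lemma card_lt_pairs (d : ℕ) :
    (univ.filter fun x : Fin d × Fin d => x.1 < x.2).card * 2 = d * (d - 1) := by
  rw [← sum_range_id_mul_two, card_filter, Fintype.sum_prod_type_right,
    ← Fin.sum_univ_eq_sum_range (fun i => i) d]
  congr 1
  refine sum_congr rfl fun b _ => ?_
  rw [← card_filter, ← Fin.card_Iio b]
  congr 1
  ext a
  simp

end Count

section Total

variable {d n : ℕ} [NeZero d] {ζ : K}

lemma weightIdem_eq_zero_of_three_values (hζ : IsPrimitiveRoot ζ d) {χ : ℕ → Fin d} {p q r : ℕ}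
    (hp : p < n) (hq : q < n) (hr : r < n) (h₁ : χ p ≠ χ q) (h₂ : χ q ≠ χ r) (h₃ : χ p ≠ χ r) :
    weightIdem ζ (fun p => zt d n (p + 1)) χ n = 0 := by
  have h := ytlRelations d n
  have hpq : p ≠ q := fun e => h₁ (e ▸ rfl)
  have hqr : q ≠ r := fun e => h₂ (e ▸ rfl)
  have hpr : p ≠ r := fun e => h₃ (e ▸ rfl)
  rcases hpq.lt_or_gt with a | a <;> rcases hqr.lt_or_gt with b | b <;>
    rcases hpr.lt_or_gt with c | c
  · exact h.weightIdem_eq_zero hζ a b hr h₁ h₂ h₃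
  · omega
  · exact h.weightIdem_eq_zero hζ c b hq h₃ h₂.symm h₁
  · exact h.weightIdem_eq_zero hζ c a hq h₃.symm h₁ h₂.symm
  · exact h.weightIdem_eq_zero hζ a c hr h₁.symm h₃ h₂
  · exact h.weightIdem_eq_zero hζ b c hp h₂ h₃.symm h₁.symm
  · omega
  · exact h.weightIdem_eq_zero hζ b a hp h₂.symm h₁.symm h₃.symm

lemma weightIdem_extend_eq_zero (hn : 0 < n) (hζ : IsPrimitiveRoot ζ d) {χ : Fin n → Fin d}
    (h : χ ∉ weightOf '' (weightIndex d n : Set _)) :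
    weightIdem ζ (fun p => zt d n (p + 1)) (extend χ) n = 0 := by
  obtain ⟨p, q, r, h₁, h₂, h₃⟩ := exists_three_values hn h
  exact weightIdem_eq_zero_of_three_values hζ p.2 q.2 r.2 (by simpa only [extend_apply])
    (by simpa only [extend_apply]) (by simpa only [extend_apply])

lemma weightDim_inl (hn : 0 < n) (hζ : IsPrimitiveRoot ζ d) (a : Fin d) :
    weightDim n ζ (extend (weightOf (n := n) (.inl a))) = catalan n := by
  rw [← weightDim_const hn hζ a]
  exact weightDim_congr fun p hp => extend_apply _ ⟨p, hp⟩

lemma weightDim_inr (hζ : IsPrimitiveRoot ζ d) {x : (Fin d × Fin d) × Finset (Fin n)}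
    (hx : x ∈ twoValuedIndex d n) :
    weightDim n ζ (extend (weightOf (.inr x))) = n.choose x.2.card := by
  obtain ⟨h, hne, hnt⟩ := mem_twoValuedIndex.1 hx
  have hlt : x.2.card < n := by
    obtain ⟨q, hq⟩ := hnt
    simpa using card_lt_univ_of_notMem hq
  have hcard : (x.2.map Fin.valEmbedding).card = x.2.card := card_map _
  rw [← hcard, ← weightDim_twoValued hζ h.ne _ (by rwa [hcard, card_pos]) (by rwa [hcard])]
  · refine weightDim_congr fun p hp => (extend_apply _ ⟨p, hp⟩).trans ?_
    exact if_congr (mem_map' Fin.valEmbedding).symm rfl rfl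
  · intro p hp
    obtain ⟨q, -, rfl⟩ := mem_map.1 hp
    exact mem_range.2 q.2

lemma weightDim_pos (hn : 0 < n) (hζ : IsPrimitiveRoot ζ d)
    {j : Fin d ⊕ ((Fin d × Fin d) × Finset (Fin n))} (hj : j ∈ weightIndex d n) :
    0 < weightDim n ζ (extend (weightOf j)) := by
  rcases j with a | x
  · rw [weightDim_inl hn hζ]
    exact Nat.pos_of_mul_pos_left
      ((succ_mul_catalan_eq_centralBinom n).symm ▸ Nat.centralBinom_pos n)
  · rw [weightDim_inr hζ (inr_mem_disjSum.1 hj)]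
    exact Nat.choose_pos ((card_le_univ _).trans_eq (Fintype.card_fin n))

lemma finiteDimensional_leftIdeal (hn : 0 < n) (hζ : IsPrimitiveRoot ζ d) (χ : Fin n → Fin d) :
    FiniteDimensional K (leftIdeal K (weightIdem ζ (fun p => zt d n (p + 1)) (extend χ) n)) := by
  by_cases h : χ ∈ weightOf '' (weightIndex d n : Set _)
  · obtain ⟨j, hj, rfl⟩ := h
    exact FiniteDimensional.of_finrank_pos (weightDim_pos hn hζ hj)
  · rw [weightIdem_extend_eq_zero hn hζ h, leftIdeal, LinearMap.mulRight_zero_eq_zero,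
      LinearMap.range_zero]
    infer_instance

lemma finrank_eq_sum_weightDim (hn : 0 < n) (hζ : IsPrimitiveRoot ζ d) :
    Module.finrank K (YTL d n) = ∑ j ∈ weightIndex d n, weightDim n ζ (extend (weightOf j)) := by
  rw [finrank_eq_sum_leftIdeal ((ytlRelations d n).completeOrthogonalIdempotents hζ)
    (finiteDimensional_leftIdeal hn hζ)]
  refine (sum_of_injOn weightOf (weightOf_injOn hn) (by simp [Set.MapsTo]) (fun χ _ h => ?_)
    fun _ _ => rfl).symm
  rw [weightIdem_extend_eq_zero hn hζ h, leftIdeal, LinearMap.mulRight_zero_eq_zero,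
    LinearMap.range_zero, finrank_bot]

lemma finrank_YTL (hn : 0 < n) (hζ : IsPrimitiveRoot ζ d) :
    2 * Module.finrank K (YTL d n) + 2 * (d * (d - 1)) =
      2 * d * catalan n + d * (d - 1) * n.centralBinom := by
  have h : Module.finrank K (YTL d n) = d * catalan n +
      #{x : Fin d × Fin d | x.1 < x.2} *
        ∑ S ∈ ((univ : Finset (Finset (Fin n))).erase ∅).erase univ, n.choose S.card := by
    rw [finrank_eq_sum_weightDim hn hζ, weightIndex, sum_disjSum,
      sum_congr rfl fun a _ => weightDim_inl hn hζ a,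
      sum_congr rfl fun x hx => weightDim_inr hζ hx, twoValuedIndex, sum_product]
    simp
  rw [h, ← sum_choose_card hn, ← card_lt_pairs]
  ring

end Total

end YokonumaTL

theorem stmt17 (d n : ℕ) (hd : 1 ≤ d) (hn : 3 ≤ n) :
    FiniteDimensional K (YTL d n) ∧
    (Module.finrank K (YTL d n) : ℚ) =
      (d : ℚ) * ((n : ℚ) * (d : ℚ) - (n : ℚ) + (d : ℚ) + 1) / 2 * (catalan n : ℚ) -
        (d : ℚ) * ((d : ℚ) - 1) := by
  have : NeZero d := ⟨by omega⟩
  have hn₀ : 0 < n := by omega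
  obtain ⟨ζ, hζ⟩ : ∃ ζ : K, IsPrimitiveRoot ζ d :=
    ⟨_, (Complex.isPrimitiveRoot_exp d (NeZero.ne d)).map_of_injective
      (algebraMap ℂ K).injective⟩
  refine ⟨YokonumaTL.finiteDimensional_of_leftIdeal
    ((YokonumaTL.ytlRelations d n).completeOrthogonalIdempotents hζ)
    (YokonumaTL.finiteDimensional_leftIdeal hn₀ hζ), ?_⟩
  have h := congrArg (Nat.cast (R := ℚ)) (YokonumaTL.finrank_YTL hn₀ hζ)
  rw [← succ_mul_catalan_eq_centralBinom] at h
  push_cast [Nat.cast_sub hd] at h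
  linear_combination h / 2
end

section
/- Let d≥1 and n≥3. The set S := { t_1^{r_1}⋯t_n^{r_n} · g_{(i,k)} : (i,k)∈𝔗_n, (r_1,…,r_n)∈{0,…,d−1}^n } spans the Yokonuma–Temperley–Lieb algebra YTL_{d,n}(u) as a ℂ(u)-vector space. -/
/-- The set 𝔗ₙ, encoded as lists of pairs `(i_j, k_j)`:
entries satisfy `1 ≤ i_j - k_j` (i.e. `k_j < i_j`) and `i_j ≤ n-1` (i.e. `i_j + 1 ≤ n`),
the `i_j` are strictly increasing, and the `i_j - k_j` are strictly increasing. -/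
def IsTT (n : ℕ) (l : List (ℕ × ℕ)) : Prop :=
  (∀ p ∈ l, p.2 < p.1 ∧ p.1 + 1 ≤ n) ∧
  List.Chain' (· < ·) (l.map Prod.fst) ∧
  List.Chain' (· < ·) (l.map (fun p => p.1 - p.2))

/-- The set of integers covered by the intervals `[i_j - k_j, i_j]`. -/
def cov (l : List (ℕ × ℕ)) : Finset ℕ :=
  l.foldr (fun p s => Finset.Icc (p.1 - p.2) p.1 ∪ s) ∅

/-- The weight of an element of 𝔗ₙ. -/
def wt (l : List (ℕ × ℕ)) : ℕ := (cov l).card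


/-- The "cycle" `g_i g_{i-1} ⋯ g_{i-k}` in `YTL_{d,n}(u)`, for a pair `p = (i, k)`. -/
noncomputable def gcycle (d n : ℕ) (p : ℕ × ℕ) : YTL d n :=
  ((List.range (p.2 + 1)).map fun s => zg d n (p.1 - s)).prod

/-- The element `g_{(i,k)} = g_{i₁,k₁} g_{i₂,k₂} ⋯ g_{i_p,k_p}` of `YTL_{d,n}(u)`. -/
noncomputable def gword (d n : ℕ) (l : List (ℕ × ℕ)) : YTL d n :=
  (l.map (gcycle d n)).prod

/-- The "framing" monomial `t₁^{r 1} t₂^{r 2} ⋯ t_n^{r n}` in `YTL_{d,n}(u)`. -/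
noncomputable def tmon (d n : ℕ) (r : ℕ → ℕ) : YTL d n :=
  ((List.range' 1 n).map fun j => zt d n j ^ r j).prod

section YTLSpanning

variable (d n : ℕ)

/-- The submonoid of framing monomials. -/
noncomputable def framing : Submonoid (YTL d n) :=
  Submonoid.closure {x | ∃ j, 1 ≤ j ∧ j ≤ n ∧ x = zt d n j}

/-- The span of the products of a framing monomial and a word of length at most `m` in the `g_i`. -/
noncomputable def wordFiltration (m : ℕ) : Submodule K (YTL d n) :=
  Submodule.span K {x | ∃ t ∈ framing d n, ∃ w : List ℕ, w.length ≤ m ∧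
    x = t * (w.map (zg d n)).prod}

/-- The descending product `g_a g_{a-1} ⋯` with `m` factors. -/
noncomputable def descProd (a m : ℕ) : YTL d n :=
  ((List.range m).map fun s => zg d n (a - s)).prod

/-- The number of letters of the word `g_{(i,k)}`. -/
def wordLength (l : List (ℕ × ℕ)) : ℕ := (l.map fun p => p.2 + 1).sum

variable {d n}

theorem YTLRel.eq {a b : FA} (h : YTLRel d n a b) :
    RingQuot.mkAlgHom K (YTLRel d n) a = RingQuot.mkAlgHom K (YTLRel d n) b :=
  RingQuot.mkAlgHom_rel K h

theorem zg_eq_zero {i : ℕ} (h : i = 0 ∨ n ≤ i) : zg d n i = 0 := by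
  simpa [zg] using (YTLRel.base (YRel.gjunk (d := d) i h)).eq

theorem zt_eq_zero {j : ℕ} (h : j = 0 ∨ n < j) : zt d n j = 0 := by
  simpa [zt] using (YTLRel.base (YRel.tjunk (d := d) j h)).eq

theorem zg_commute {i j : ℕ} (h : i + 1 < j ∨ j + 1 < i) : Commute (zg d n i) (zg d n j) := by
  by_cases hi : i = 0 ∨ n ≤ i
  · rw [zg_eq_zero hi]; exact Commute.zero_left _
  by_cases hj : j = 0 ∨ n ≤ j
  · rw [zg_eq_zero hj]; exact Commute.zero_right _
  simpa [zg, Commute, SemiconjBy] using (YTLRel.base (YRel.commute (d := d) (n := n) i j (by omega) (by omega)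
    (by omega) (by omega) h)).eq

theorem zt_commute (i j : ℕ) : Commute (zt d n i) (zt d n j) := by
  by_cases hi : i = 0 ∨ n < i
  · rw [zt_eq_zero hi]; exact Commute.zero_left _
  by_cases hj : j = 0 ∨ n < j
  · rw [zt_eq_zero hj]; exact Commute.zero_right _
  simpa [zt, Commute, SemiconjBy] using (YTLRel.base (YRel.tcomm (d := d) (n := n) i j (by omega) (by omega)
    (by omega) (by omega))).eq

theorem zt_pow_d {j : ℕ} (hj : 1 ≤ j) (hjn : j ≤ n) : zt d n j ^ d = 1 := by
  simpa [zt] using (YTLRel.base (YRel.torder (d := d) (n := n) j hj hjn)).eq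

theorem swapIdx_swapIdx (i j : ℕ) : swapIdx i (swapIdx i j) = j := by
  unfold swapIdx; split_ifs <;> omega

theorem zg_mul_zt {i j : ℕ} (hi : 1 ≤ i) (hin : i + 1 ≤ n) (hj : 1 ≤ j) (hjn : j ≤ n) :
    ∃ k, 1 ≤ k ∧ k ≤ n ∧ zg d n i * zt d n j = zt d n k * zg d n i := by
  have hk : 1 ≤ swapIdx i j ∧ swapIdx i j ≤ n := by
    unfold swapIdx; split_ifs <;> omega
  refine ⟨swapIdx i j, hk.1, hk.2, ?_⟩
  have h := (YTLRel.base (YRel.tg (d := d) (n := n) i (swapIdx i j) hi hin hk.1 hk.2)).eq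
  rw [swapIdx_swapIdx] at h
  simpa [zt, zg] using h.symm

theorem zt_mem_framing {j : ℕ} (hj : 1 ≤ j) (hjn : j ≤ n) : zt d n j ∈ framing d n :=
  Submonoid.subset_closure ⟨j, hj, hjn, rfl⟩

theorem zg_mul_framing (i : ℕ) {t : YTL d n} (ht : t ∈ framing d n) :
    ∃ t' ∈ framing d n, zg d n i * t = t' * zg d n i := by
  by_cases hi : i = 0 ∨ n ≤ i
  · exact ⟨1, one_mem _, by simp [zg_eq_zero hi]⟩
  induction ht using Submonoid.closure_induction with
  | mem x hx =>
    obtain ⟨j, hj, hjn, rfl⟩ := hx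
    obtain ⟨k, hk, hkn, h⟩ := zg_mul_zt (d := d) (i := i) (by omega) (by omega) hj hjn
    exact ⟨_, zt_mem_framing hk hkn, h⟩
  | one => exact ⟨1, one_mem _, by simp⟩
  | mul x y _ _ hx hy =>
    obtain ⟨x', hx', hx⟩ := hx
    obtain ⟨y', hy', hy⟩ := hy
    exact ⟨x' * y', mul_mem hx' hy', by rw [← mul_assoc, hx, mul_assoc, hy, mul_assoc]⟩

theorem wordProd_mul_framing (w : List ℕ) {t : YTL d n} (ht : t ∈ framing d n) :
    ∃ t' ∈ framing d n, (w.map (zg d n)).prod * t = t' * (w.map (zg d n)).prod := by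
  induction w with
  | nil => exact ⟨t, ht, by simp⟩
  | cons i w ih =>
    obtain ⟨t', ht', h⟩ := ih
    obtain ⟨t'', ht'', h'⟩ := zg_mul_framing i ht'
    exact ⟨t'', ht'', by
      rw [List.map_cons, List.prod_cons, mul_assoc, h, ← mul_assoc, h', mul_assoc]⟩

theorem zt_mul_tmon {j : ℕ} (hj : 1 ≤ j) (hjn : j ≤ n) (r : ℕ → ℕ) :
    zt d n j * tmon d n r = tmon d n (Function.update r j ((r j + 1) % d)) := by
  have hsplit : List.range' 1 n = List.range' 1 (j - 1) ++ j :: List.range' (j + 1) (n - j) := by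
    have h1 : n = (j - 1) + (1 + (n - j)) := by omega
    have h2 : 1 + (j - 1) = j := by omega
    conv_lhs => rw [h1, ← List.range'_append_1, h2, add_comm 1 (n - j), List.range'_succ]
  have hleft : ∀ k ∈ List.range' 1 (j - 1), k ≠ j := by
    intro k hk; rw [List.mem_range'_1] at hk; omega
  have hright : ∀ k ∈ List.range' (j + 1) (n - j), k ≠ j := by
    intro k hk; rw [List.mem_range'_1] at hk; omega
  have hcongr : ∀ L : List ℕ, (∀ k ∈ L, k ≠ j) →
      L.map (fun k => zt d n k ^ Function.update r j ((r j + 1) % d) k) =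
        L.map (fun k => zt d n k ^ r k) := fun L hL =>
    List.map_congr_left fun k hk => by rw [Function.update_of_ne (hL k hk)]
  have hcomm : Commute (zt d n j) ((List.range' 1 (j - 1)).map fun k => zt d n k ^ r k).prod := by
    refine Commute.list_prod_right _ _ fun x hx => ?_
    obtain ⟨k, -, rfl⟩ := List.mem_map.1 hx
    exact (zt_commute j k).pow_right _
  unfold tmon
  rw [hsplit]
  simp only [List.map_append, List.map_cons, List.prod_append, List.prod_cons]
  rw [hcongr _ hleft, hcongr _ hright, Function.update_self, ← mul_assoc, hcomm.eq, mul_assoc,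
    ← mul_assoc (zt d n j), ← pow_succ', pow_eq_pow_mod _ (zt_pow_d hj hjn)]

theorem exists_eq_tmon (hd : 1 ≤ d) {t : YTL d n} (ht : t ∈ framing d n) :
    ∃ r : ℕ → ℕ, (∀ j, r j ≤ d - 1) ∧ t = tmon d n r := by
  induction ht using Submonoid.closure_induction_left with
  | one => exact ⟨0, by simp, by simp [tmon]⟩
  | mul_left x hx y _ hy =>
    obtain ⟨j, hj, hjn, rfl⟩ := hx
    obtain ⟨r, hr, rfl⟩ := hy
    refine ⟨_, fun k => ?_, zt_mul_tmon hj hjn r⟩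
    rcases eq_or_ne k j with rfl | hk
    · rw [Function.update_self]
      have := Nat.mod_lt (r k + 1) hd
      omega
    · rw [Function.update_of_ne hk]
      exact hr k

theorem wordFiltration_mono {a b : ℕ} (h : a ≤ b) : wordFiltration d n a ≤ wordFiltration d n b :=
  Submodule.span_mono fun _ ⟨t, ht, w, hw, hx⟩ => ⟨t, ht, w, hw.trans h, hx⟩

theorem framing_mem_wordFiltration {t : YTL d n} (ht : t ∈ framing d n) :
    t ∈ wordFiltration d n 0 :=
  Submodule.subset_span ⟨t, ht, [], le_rfl, by simp⟩

theorem zg_mem_wordFiltration (i : ℕ) : zg d n i ∈ wordFiltration d n 1 :=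
  Submodule.subset_span ⟨1, one_mem _, [i], by simp, by simp⟩

theorem one_mem_wordFiltration : (1 : YTL d n) ∈ wordFiltration d n 0 :=
  framing_mem_wordFiltration (one_mem _)

theorem mul_mem_wordFiltration {a b c : ℕ} {x y : YTL d n} (hx : x ∈ wordFiltration d n a)
    (hy : y ∈ wordFiltration d n b) (h : a + b ≤ c) : x * y ∈ wordFiltration d n c := by
  have hmul := Submodule.mul_mem_mul hx hy
  unfold wordFiltration at hmul
  rw [Submodule.span_mul_span] at hmul
  refine Submodule.span_mono ?_ hmul
  rintro _ ⟨_, ⟨t, ht, w, hw, rfl⟩, _, ⟨t', ht', w', hw', rfl⟩, rfl⟩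
  obtain ⟨s, hs, hst⟩ := wordProd_mul_framing w ht'
  refine ⟨t * s, mul_mem ht hs, w ++ w', by simp; omega, ?_⟩
  simp only [List.map_append, List.prod_append]
  rw [mul_assoc, ← mul_assoc _ t', hst]
  simp only [mul_assoc]

theorem ef_mem_wordFiltration {i : ℕ} (hi : 1 ≤ i) (hin : i + 1 ≤ n) :
    RingQuot.mkAlgHom K (YTLRel d n) (ef d i) ∈ wordFiltration d n 0 := by
  rw [ef, map_smul, map_sum]
  refine Submodule.smul_mem _ _ (Submodule.sum_mem _ fun s _ => framing_mem_wordFiltration ?_)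
  rw [map_mul, map_pow, map_pow]
  exact mul_mem (pow_mem (zt_mem_framing hi (by omega)) _)
    (pow_mem (zt_mem_framing (by omega) hin) _)

theorem zg_mul_self_mem (i : ℕ) : zg d n i * zg d n i ∈ wordFiltration d n 1 := by
  by_cases hi : i = 0 ∨ n ≤ i
  · simp [zg_eq_zero hi]
  have he := ef_mem_wordFiltration (d := d) (n := n) (i := i) (by omega) (by omega)
  have h := (YTLRel.base (YRel.quad (d := d) (n := n) i (by omega) (by omega))).eq
  rw [map_add, map_add, map_smul, map_smul, map_mul, map_one, map_pow, sq] at h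
  change zg d n i * zg d n i = _ at h
  rw [h]
  exact add_mem (add_mem (wordFiltration_mono zero_le_one one_mem_wordFiltration)
    (Submodule.smul_mem _ _ (wordFiltration_mono zero_le_one he)))
    (Submodule.smul_mem _ _ (mul_mem_wordFiltration he (zg_mem_wordFiltration i) le_rfl))

theorem zg_braid_mem (i : ℕ) :
    zg d n i * (zg d n (i + 1) * zg d n i) ∈ wordFiltration d n 2 := by
  by_cases hi : i = 0
  · simp [zg_eq_zero (d := d) (n := n) (Or.inl hi)]
  by_cases hin : n ≤ i + 1
  · simp [zg_eq_zero (d := d) (n := n) (Or.inr hin)]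
  have h := (YTLRel.tl (d := d) (n := n) i (by omega) (by omega)).eq
  simp only [map_add, map_mul, map_one, map_zero] at h
  have h' : zg d n i * zg d n (i + 1) * zg d n i + zg d n i * zg d n (i + 1) +
    zg d n (i + 1) * zg d n i + zg d n i + zg d n (i + 1) + 1 = 0 := h
  have heq : zg d n i * (zg d n (i + 1) * zg d n i) = -(zg d n i * zg d n (i + 1) +
      zg d n (i + 1) * zg d n i + zg d n i + zg d n (i + 1) + 1) := by
    rw [eq_neg_iff_add_eq_zero, ← h', mul_assoc]
    abel
  have hone : ∀ j, zg d n j ∈ wordFiltration d n 2 := fun j =>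
    wordFiltration_mono one_le_two (zg_mem_wordFiltration j)
  have htwo : ∀ j k, zg d n j * zg d n k ∈ wordFiltration d n 2 := fun j k =>
    mul_mem_wordFiltration (zg_mem_wordFiltration j) (zg_mem_wordFiltration k) le_rfl
  rw [heq]
  exact neg_mem (add_mem (add_mem (add_mem (add_mem (htwo _ _) (htwo _ _)) (hone _)) (hone _))
    (wordFiltration_mono zero_le_two one_mem_wordFiltration))

theorem zg_braid_mem' (i : ℕ) :
    zg d n (i + 1) * (zg d n i * zg d n (i + 1)) ∈ wordFiltration d n 2 := by
  by_cases hi : i = 0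
  · simp [zg_eq_zero (d := d) (n := n) (Or.inl hi)]
  by_cases hin : n ≤ i + 1
  · simp [zg_eq_zero (d := d) (n := n) (Or.inr hin)]
  have h := (YTLRel.base (YRel.braid (d := d) (n := n) i (by omega) (by omega))).eq
  simp only [map_mul] at h
  have h' : zg d n i * zg d n (i + 1) * zg d n i =
    zg d n (i + 1) * zg d n i * zg d n (i + 1) := h
  rw [← mul_assoc, ← h', mul_assoc]
  exact zg_braid_mem i

theorem descProd_succ (a m : ℕ) :
    descProd d n a (m + 1) = zg d n a * descProd d n (a - 1) m := by
  simp only [descProd, List.range_succ_eq_map, List.map_cons, List.map_map, List.prod_cons,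
    Nat.sub_zero, Function.comp_def, Nat.succ_eq_add_one]
  congr 4
  funext s
  congr 1
  omega

theorem gcycle_eq_descProd (a k : ℕ) : gcycle d n (a, k) = descProd d n a (k + 1) := rfl

theorem descProd_mem (a m : ℕ) : descProd d n a m ∈ wordFiltration d n m := by
  induction m generalizing a with
  | zero => simpa [descProd] using one_mem_wordFiltration
  | succ m ih =>
    rw [descProd_succ]
    exact mul_mem_wordFiltration (zg_mem_wordFiltration a) (ih _) (by omega)

theorem gword_cons (p : ℕ × ℕ) (l : List (ℕ × ℕ)) :
    gword d n (p :: l) = gcycle d n p * gword d n l := by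
  simp [gword]

theorem wordLength_cons (p : ℕ × ℕ) (l : List (ℕ × ℕ)) :
    wordLength (p :: l) = p.2 + 1 + wordLength l := by
  simp [wordLength]

theorem gword_mem (l : List (ℕ × ℕ)) : gword d n l ∈ wordFiltration d n (wordLength l) := by
  induction l with
  | nil => simpa [gword, wordLength] using one_mem_wordFiltration
  | cons p l ih =>
    rw [gword_cons, wordLength_cons]
    exact mul_mem_wordFiltration (descProd_mem p.1 (p.2 + 1)) ih le_rfl

theorem zg_commute_descProd {i a : ℕ} (h : a + 2 ≤ i) (m : ℕ) :
    Commute (zg d n i) (descProd d n a m) := by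
  refine Commute.list_prod_right _ _ fun x hx => ?_
  obtain ⟨s, -, rfl⟩ := List.mem_map.1 hx
  exact zg_commute (by omega)

/-- Multiplying a descending product by one of its own letters lowers the filtration degree. -/
theorem zg_mul_descProd_mem {i a m : ℕ} (hia : i ≤ a) (ham : a < i + m) :
    zg d n i * descProd d n a m ∈ wordFiltration d n m := by
  induction m generalizing a with
  | zero => omega
  | succ m ih =>
    rw [descProd_succ, ← mul_assoc]
    rcases hia.eq_or_lt with rfl | hlt
    · exact mul_mem_wordFiltration (zg_mul_self_mem i) (descProd_mem _ m) (by omega)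
    · rcases (Nat.succ_le_of_lt hlt).eq_or_lt with rfl | hlt'
      · obtain ⟨k, rfl⟩ : ∃ k, m = k + 1 := ⟨m - 1, by omega⟩
        rw [Nat.succ_eq_add_one, Nat.add_sub_cancel, descProd_succ, ← mul_assoc,
          mul_assoc (zg d n i)]
        exact mul_mem_wordFiltration (zg_braid_mem i) (descProd_mem _ k) (by omega)
      · rw [(zg_commute (d := d) (n := n) (i := i) (j := a) (by omega)).eq, mul_assoc]
        exact mul_mem_wordFiltration (zg_mem_wordFiltration a)
          (ih (a := a - 1) (by omega) (by omega)) (by omega)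

/-- The condition defining `𝔗ₙ`, with the monotonicity stated pairwise. -/
def PairwiseTT (n : ℕ) (l : List (ℕ × ℕ)) : Prop :=
  (∀ p ∈ l, p.2 < p.1 ∧ p.1 + 1 ≤ n) ∧
  l.Pairwise fun p q => p.1 < q.1 ∧ p.1 - p.2 < q.1 - q.2

theorem PairwiseTT.isTT {l : List (ℕ × ℕ)} (h : PairwiseTT n l) : IsTT n l := by
  refine ⟨h.1, ?_, ?_⟩
  · exact (List.pairwise_map.2 (h.2.imp And.left)).isChain
  · exact (List.pairwise_map.2 (h.2.imp And.right)).isChain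

theorem PairwiseTT.cons {p : ℕ × ℕ} {l : List (ℕ × ℕ)} (h : PairwiseTT n l)
    (hp : p.2 < p.1) (hpn : p.1 + 1 ≤ n)
    (hlt : ∀ q ∈ l, p.1 < q.1 ∧ p.1 - p.2 < q.1 - q.2) : PairwiseTT n (p :: l) :=
  ⟨List.forall_mem_cons.2 ⟨⟨hp, hpn⟩, h.1⟩, List.pairwise_cons.2 ⟨hlt, h.2⟩⟩

/-- Left multiplication of a normal word by a generator gives, modulo words of smaller length,
a normal word; its tops and bottoms are those of the original word and the new letter. -/
theorem zg_mul_gword {i : ℕ} (hi : 1 ≤ i) (hin : i + 1 ≤ n) {l : List (ℕ × ℕ)}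
    (hl : PairwiseTT n l) :
    (∃ l', PairwiseTT n l' ∧
      (∀ q ∈ l', (q.1 = i ∨ ∃ p ∈ l, q.1 = p.1) ∧
        (q.1 - q.2 = i ∨ ∃ p ∈ l, q.1 - q.2 = p.1 - p.2)) ∧
      wordLength l' = wordLength l + 1 ∧ zg d n i * gword d n l = gword d n l') ∨
    zg d n i * gword d n l ∈ wordFiltration d n (wordLength l) := by
  have hsingle : gcycle d n (i, 0) = zg d n i := by simp [gcycle]
  induction l with
  | nil =>
    exact Or.inl ⟨[(i, 0)], hl.cons hi hin (by simp), by simp, by simp [wordLength],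
      by rw [gword_cons, hsingle]⟩
  | cons p l ih =>
    obtain ⟨a, k⟩ := p
    obtain ⟨hlt, hpw⟩ := List.pairwise_cons.1 hl.2
    obtain ⟨⟨hka, han⟩, hval⟩ := List.forall_mem_cons.1 hl.1
    simp only at hka han hlt
    have hl' : PairwiseTT n l := ⟨hval, hpw⟩
    rw [gword_cons, gcycle_eq_descProd, wordLength_cons]
    by_cases hsmall : i < a - k
    · refine Or.inl ⟨(i, 0) :: (a, k) :: l, hl.cons hi hin ?_, ?_, ?_, ?_⟩
      · refine List.forall_mem_cons.2 ⟨by simp only; omega, fun q hq => ?_⟩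
        have := hlt q hq
        simp only
        omega
      · exact List.forall_mem_cons.2 ⟨by simp, fun q hq => ⟨.inr ⟨q, hq, rfl⟩, .inr ⟨q, hq, rfl⟩⟩⟩
      · simp only [wordLength_cons]; omega
      · rw [gword_cons, gword_cons, hsingle, gcycle_eq_descProd]
    by_cases hmid : i ≤ a
    · right
      rw [← mul_assoc]
      exact mul_mem_wordFiltration (zg_mul_descProd_mem hmid (by omega)) (gword_mem l) le_rfl
    by_cases hnext : i = a + 1
    · subst hnext
      by_cases hext : ∀ q ∈ l, a + 1 < q.1
      · refine Or.inl ⟨(a + 1, k + 1) :: l, hl'.cons (by simpa using hka) hin ?_, ?_, ?_, ?_⟩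
        · intro q hq
          have := hlt q hq
          have := hext q hq
          simp only
          omega
        · refine List.forall_mem_cons.2 ⟨⟨.inl rfl, .inr ⟨(a, k), by simp, by simp⟩⟩, fun q hq =>
            ⟨.inr ⟨q, by simp [hq], rfl⟩, .inr ⟨q, by simp [hq], rfl⟩⟩⟩
        · simp only [wordLength_cons]; omega
        · rw [gword_cons, gcycle_eq_descProd, descProd_succ (a + 1), Nat.add_sub_cancel, mul_assoc]
      · right
        cases l with
        | nil => simp at hext
        | cons q l =>
          obtain ⟨b, m⟩ := q
          have hb : b = a + 1 := by
            by_contra hne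
            have hab := (hlt (b, m) (by simp)).1
            simp only at hab
            refine hext (List.forall_mem_cons.2 ⟨by simp only; omega, fun q hq => ?_⟩)
            have := ((List.pairwise_cons.1 hpw).1 q hq).1
            simp only at this
            omega
          subst hb
          have hc : zg d n (a + 1) * (descProd d n a (k + 1) * (zg d n (a + 1) *
              (descProd d n a m * gword d n l))) =
              (zg d n (a + 1) * (zg d n a * zg d n (a + 1))) *
                (descProd d n (a - 1) k * (descProd d n a m * gword d n l)) := by
            have := (zg_commute_descProd (d := d) (n := n) (i := a + 1) (a := a - 1)
              (by omega) k).eq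
            rw [descProd_succ a k]
            simp only [mul_assoc]
            rw [← mul_assoc (descProd d n (a - 1) k), ← this, mul_assoc]
          rw [gword_cons, gcycle_eq_descProd, descProd_succ (a + 1), Nat.add_sub_cancel,
            mul_assoc (zg d n (a + 1)) (descProd d n a m), hc, wordLength_cons]
          exact mul_mem_wordFiltration (zg_braid_mem' a)
            (mul_mem_wordFiltration (descProd_mem _ k)
              (mul_mem_wordFiltration (descProd_mem _ m) (gword_mem l) le_rfl) le_rfl)
            (by simp only; omega)
    · have hcomm := (zg_commute_descProd (d := d) (n := n) (i := i) (a := a)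
        (by omega) (k + 1)).eq
      rw [← mul_assoc, hcomm, mul_assoc]
      rcases ih hl' with ⟨l', hl'', hmem, hlen, heq⟩ | hlow
      · refine Or.inl ⟨(a, k) :: l', hl''.cons hka han ?_, ?_, ?_, ?_⟩
        · intro q hq
          simp only
          obtain ⟨htop, hbot⟩ := hmem q hq
          constructor
          · rcases htop with h | ⟨p, hp, h⟩
            · omega
            · rw [h]; exact (hlt p hp).1
          · rcases hbot with h | ⟨p, hp, h⟩
            · omega
            · rw [h]; exact (hlt p hp).2
        · refine List.forall_mem_cons.2 ⟨⟨.inr ⟨_, List.mem_cons_self, rfl⟩,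
            .inr ⟨_, List.mem_cons_self, rfl⟩⟩, fun q hq => ?_⟩
          obtain ⟨htop, hbot⟩ := hmem q hq
          exact ⟨htop.imp_right fun ⟨p, hp, h⟩ => ⟨p, List.mem_cons_of_mem _ hp, h⟩,
            hbot.imp_right fun ⟨p, hp, h⟩ => ⟨p, List.mem_cons_of_mem _ hp, h⟩⟩
        · simp only [wordLength_cons, hlen]; omega
        · rw [gword_cons, heq, gcycle_eq_descProd]
      · exact Or.inr (mul_mem_wordFiltration (descProd_mem a (k + 1)) hlow le_rfl)

theorem wordProd_eq_gword_or_mem (w : List ℕ) :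
    (∃ l, PairwiseTT n l ∧ wordLength l = w.length ∧ (w.map (zg d n)).prod = gword d n l) ∨
    ∃ m < w.length, (w.map (zg d n)).prod ∈ wordFiltration d n m := by
  induction w with
  | nil => exact Or.inl ⟨[], ⟨by simp, List.Pairwise.nil⟩, rfl, rfl⟩
  | cons i w ih =>
    rw [List.map_cons, List.prod_cons, List.length_cons]
    by_cases hi : i = 0 ∨ n ≤ i
    · exact Or.inr ⟨0, by omega, by simp [zg_eq_zero hi]⟩
    rcases ih with ⟨l, hl, hlen, heq⟩ | ⟨m, hm, hmem⟩
    · rw [heq, ← hlen]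
      rcases zg_mul_gword (d := d) (i := i) (by omega) (by omega) hl with
        ⟨l', hl', -, hlen', heq'⟩ | hlow
      · exact Or.inl ⟨l', hl', hlen', heq'⟩
      · exact Or.inr ⟨_, Nat.lt_succ_self _, hlow⟩
    · exact Or.inr ⟨m + 1, by omega,
        mul_mem_wordFiltration (zg_mem_wordFiltration i) hmem (by omega)⟩

theorem wordFiltration_le_span (hd : 1 ≤ d) (m : ℕ) :
    wordFiltration d n m ≤ Submodule.span K {a : YTL d n | ∃ (l : List (ℕ × ℕ)) (r : ℕ → ℕ),
      IsTT n l ∧ (∀ j, r j ≤ d - 1) ∧ a = tmon d n r * gword d n l} := by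
  induction m using Nat.strong_induction_on with
  | _ m ih =>
    refine Submodule.span_le.2 ?_
    rintro _ ⟨t, ht, w, hw, rfl⟩
    rcases wordProd_eq_gword_or_mem (d := d) (n := n) w with ⟨l, hl, -, heq⟩ | ⟨k, hk, hmem⟩
    · obtain ⟨r, hr, rfl⟩ := exists_eq_tmon hd ht
      exact Submodule.subset_span ⟨l, r, hl.isTT, hr, by rw [heq]⟩
    · exact ih k (by omega)
        (mul_mem_wordFiltration (framing_mem_wordFiltration ht) hmem (by omega))

theorem exists_mem_wordFiltration (x : YTL d n) : ∃ m, x ∈ wordFiltration d n m := by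
  obtain ⟨y, rfl⟩ := RingQuot.mkAlgHom_surjective K (YTLRel d n) x
  induction y using FreeAlgebra.induction with
  | grade0 c =>
    refine ⟨0, ?_⟩
    rw [AlgHom.commutes, Algebra.algebraMap_eq_smul_one]
    exact Submodule.smul_mem _ _ one_mem_wordFiltration
  | grade1 s =>
    rcases s with i | j
    · exact ⟨1, zg_mem_wordFiltration i⟩
    · refine ⟨0, ?_⟩
      change zt d n j ∈ _
      by_cases hj : j = 0 ∨ n < j
      · simp [zt_eq_zero hj]
      · exact framing_mem_wordFiltration (zt_mem_framing (by omega) (by omega))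
  | mul a b ha hb =>
    obtain ⟨p, hp⟩ := ha
    obtain ⟨q, hq⟩ := hb
    exact ⟨p + q, by rw [map_mul]; exact mul_mem_wordFiltration hp hq le_rfl⟩
  | add a b ha hb =>
    obtain ⟨p, hp⟩ := ha
    obtain ⟨q, hq⟩ := hb
    exact ⟨p + q, by
      rw [map_add]
      exact add_mem (wordFiltration_mono (by omega) hp) (wordFiltration_mono (by omega) hq)⟩

end YTLSpanning

theorem stmt18 (d n : ℕ) (hd : 1 ≤ d) (hn : 3 ≤ n) :
    Submodule.span K {a : YTL d n | ∃ (l : List (ℕ × ℕ)) (r : ℕ → ℕ),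
      IsTT n l ∧ (∀ j, r j ≤ d - 1) ∧ a = tmon d n r * gword d n l} = ⊤ := by
  refine eq_top_iff.2 fun x _ => ?_
  obtain ⟨m, hm⟩ := exists_mem_wordFiltration x
  exact wordFiltration_le_span hd m hm
end
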